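/- Let L > 0 and T > 0. There exist η > 0 and C > 0 such that for every ε ∈ (0,1], every initial datum y₀ with ‖y₀‖_{L²(0,L)} ≤ η, and every classical solution y of the modified KdV system (with cutoff Φ_ε) on [0,T] with y(0,·) = y₀, one has ‖y(t,·)‖_{H₀¹(0,L)} ≤ (C/√t) ‖y₀‖_{L²(0,L)} for all t ∈ (0,T]. -/

import Mathlib

open Set Real MeasureTheory

/-- The `L²(0,L)` norm of a function on `(0,L)`. -/
noncomputable def L2norm (L : ℝ) (f : ℝ → ℝ) : ℝ :=
  Real.sqrt (∫ x in (0:ℝ)..L, (f x) ^ 2)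

/-- A smooth cutoff `Φ ∈ C^∞([0,∞);[0,1])` with `Φ ≡ 1` on `[0,1/2]`, `Φ ≡ 0` on
`[1,∞)` and `Φ′ ≤ 0`.  (The rescaled cutoff is `Φ_ε(r) = Φ(r/ε)`.) -/
def IsCutoff (Φ : ℝ → ℝ) : Prop :=
  ContDiff ℝ (⊤ : ℕ∞) Φ ∧
  (∀ r ∈ Ici (0:ℝ), Φ r ∈ Icc (0:ℝ) 1) ∧
  (∀ r ∈ Icc (0:ℝ) (1/2 : ℝ), Φ r = 1) ∧
  (∀ r ∈ Ici (1:ℝ), Φ r = 0) ∧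
  (∀ r ∈ Ici (0:ℝ), deriv Φ r ≤ 0)

/-- A classical solution of the modified KdV system (with cutoff `Φ_ε = Φ(·/ε)`)
`y_t + y_x + y_xxx + Φ_ε(‖y(t,·)‖_{L²(0,L)}) y y_x = 0`,
`y(t,0) = y(t,L) = y_x(t,L) = 0`, on `[0,T] × [0,L]`. -/
def IsModifiedKdVSol (L T ε : ℝ) (Φ : ℝ → ℝ) (y : ℝ → ℝ → ℝ) : Prop :=
  (∀ t ∈ Icc (0:ℝ) T, ContDiffOn ℝ 3 (y t) (Icc (0:ℝ) L)) ∧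
  (∀ x ∈ Icc (0:ℝ) L, ContDiffOn ℝ 1 (fun s => y s x) (Icc (0:ℝ) T)) ∧
  ContinuousOn (fun p : ℝ × ℝ => y p.1 p.2) (Icc (0:ℝ) T ×ˢ Icc (0:ℝ) L) ∧
  (∀ t ∈ Ioo (0:ℝ) T, ∀ x ∈ Ioo (0:ℝ) L,
    derivWithin (fun s => y s x) (Icc (0:ℝ) T) t
      + derivWithin (y t) (Icc (0:ℝ) L) x
      + iteratedDerivWithin 3 (y t) (Icc (0:ℝ) L) x
      + Φ (L2norm L (y t) / ε) * (y t x * derivWithin (y t) (Icc (0:ℝ) L) x) = 0) ∧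
  (∀ t ∈ Icc (0:ℝ) T,
    y t 0 = 0 ∧ y t L = 0 ∧ derivWithin (y t) (Icc (0:ℝ) L) L = 0)

/-- The `H¹(0,L)` (hence `H₀¹(0,L)`) norm of a function on `(0,L)`, the derivative
being taken within `[0,L]`. -/
noncomputable def H1norm (L : ℝ) (f : ℝ → ℝ) : ℝ :=
  Real.sqrt (∫ x in (0:ℝ)..L, ((f x) ^ 2 + (derivWithin f (Icc (0:ℝ) L) x) ^ 2))

/-!
Testing the equation with the weight `1 + κx` gives the Kato smoothing effect: the space-time `L²`
norm of `u_x` is controlled by the initial datum, and is small for small data. The same weight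
applied to a time difference `u(τ + r) - u(τ)` shows that its `L²` norm grows at most by a fixed
factor over `[0,T]` and that its gradient is dissipated, because the growth rate is governed by the
integral of `‖u_x‖²`, whatever the coefficient does, as long as it varies with the `L²` norm in a
scale-invariant way. Since the difference is the time integral of the `x`-derivative of the flux, a
Nash-type argument turns the dissipation into the Lipschitz rate
`‖u(t + r) - u(t)‖ ≤ A t ^ (-3/2) r`. The flux is itself bounded through this rate, and the
resulting bootstrap halves `A` until it is comparable to the initial datum. Then the equation
controls `u_xxx` by `t ^ (-3/2)`, and interpolation with the nonincreasing `L²` norm yields the rate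
`t ^ (-1/2)` for `u_x`.

The bootstrap needs some finite `A` to start from, but a classical solution is not assumed to have a
bounded time derivative. At each time a bound on the speed propagates forward for a short while, at
a rate depending on the size of the solution; Baire's theorem, applied to the sets of times where
the third derivative is bounded by `n`, rules out times near which the speed is unbounded.
-/

open Filter Topology

/-! ### The `L²` norm of continuous functions -/

section L2norm

variable {L : ℝ} {f g : ℝ → ℝ}

lemma L2norm_nonneg (L : ℝ) (f : ℝ → ℝ) : 0 ≤ L2norm L f := Real.sqrt_nonneg _

lemma sq_L2norm (hL : 0 ≤ L) (f : ℝ → ℝ) : L2norm L f ^ 2 = ∫ x in (0 : ℝ)..L, f x ^ 2 :=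
  Real.sq_sqrt (intervalIntegral.integral_nonneg hL fun _ _ => sq_nonneg _)

lemma L2norm_congr (hL : 0 ≤ L) (h : EqOn f g (Ioo 0 L)) : L2norm L f = L2norm L g := by
  rw [L2norm, L2norm, intervalIntegral.integral_of_le hL, intervalIntegral.integral_of_le hL,
    integral_Ioc_eq_integral_Ioo, integral_Ioc_eq_integral_Ioo]
  exact congrArg _ (setIntegral_congr_fun measurableSet_Ioo fun x hx => by simp [h hx])

lemma memLp_two_of_continuousOn_Icc (hf : ContinuousOn f (Icc 0 L)) :
    MemLp f 2 (volume.restrict (Ioc 0 L)) :=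
  MemLp.mono_measure (Measure.restrict_mono_set _ Ioc_subset_Icc_self) <|
    (memLp_two_iff_integrable_sq (hf.aestronglyMeasurable measurableSet_Icc)).2
      (hf.pow 2).integrableOn_Icc

lemma eLpNorm_eq_ofReal_L2norm (hL : 0 ≤ L) (hf : ContinuousOn f (Icc 0 L)) :
    eLpNorm f 2 (volume.restrict (Ioc 0 L)) = ENNReal.ofReal (L2norm L f) := by
  rw [(memLp_two_of_continuousOn_Icc hf).eLpNorm_eq_integral_rpow_norm two_ne_zero
    ENNReal.ofNat_ne_top, L2norm, intervalIntegral.integral_of_le hL, Real.sqrt_eq_rpow]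
  simp only [ENNReal.toReal_ofNat, Real.rpow_two, Real.norm_eq_abs, sq_abs, one_div]

lemma norm_toLp_eq_L2norm (hL : 0 ≤ L) (hf : ContinuousOn f (Icc 0 L)) :
    ‖(memLp_two_of_continuousOn_Icc hf).toLp f‖ = L2norm L f := by
  rw [Lp.norm_toLp, eLpNorm_eq_ofReal_L2norm hL hf, ENNReal.toReal_ofReal (L2norm_nonneg L f)]

lemma abs_integral_mul_le_L2norm (hL : 0 ≤ L) (hf : ContinuousOn f (Icc 0 L))
    (hg : ContinuousOn g (Icc 0 L)) :
    |∫ x in (0 : ℝ)..L, f x * g x| ≤ L2norm L f * L2norm L g := by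
  have hf' := memLp_two_of_continuousOn_Icc hf
  have hg' := memLp_two_of_continuousOn_Icc hg
  rw [← norm_toLp_eq_L2norm hL hf, ← norm_toLp_eq_L2norm hL hg,
    intervalIntegral.integral_of_le hL]
  refine le_of_eq_of_le (congrArg _ ?_) (abs_real_inner_le_norm (hf'.toLp f) (hg'.toLp g))
  rw [L2.inner_def]
  refine integral_congr_ae ?_
  filter_upwards [hf'.coeFn_toLp, hg'.coeFn_toLp] with x hfx hgx
  simp [hfx, hgx, mul_comm]

lemma L2norm_add_le (hL : 0 ≤ L) (hf : ContinuousOn f (Icc 0 L))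
    (hg : ContinuousOn g (Icc 0 L)) : L2norm L (f + g) ≤ L2norm L f + L2norm L g := by
  rw [← norm_toLp_eq_L2norm hL hf, ← norm_toLp_eq_L2norm hL hg,
    ← norm_toLp_eq_L2norm hL (hf.add hg)]
  exact norm_add_le ((memLp_two_of_continuousOn_Icc hf).toLp f)
    ((memLp_two_of_continuousOn_Icc hg).toLp g)

lemma L2norm_const_mul (L c : ℝ) (f : ℝ → ℝ) :
    L2norm L (fun x => c * f x) = |c| * L2norm L f := by
  simp_rw [L2norm, mul_pow]
  rw [intervalIntegral.integral_const_mul, Real.sqrt_mul (sq_nonneg c), Real.sqrt_sq_eq_abs]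

lemma L2norm_abs (L : ℝ) (f : ℝ → ℝ) : L2norm L (fun x => |f x|) = L2norm L f := by
  simp_rw [L2norm, sq_abs]

lemma L2norm_sub_comm (L : ℝ) (f g : ℝ → ℝ) : L2norm L (f - g) = L2norm L (g - f) := by
  simp_rw [L2norm, Pi.sub_apply, sub_sq_comm]

lemma L2norm_le_add_sub (hL : 0 ≤ L) (hf : ContinuousOn f (Icc 0 L))
    (hg : ContinuousOn g (Icc 0 L)) : L2norm L f ≤ L2norm L g + L2norm L (f - g) := by
  simpa using L2norm_add_le hL hg (hf.sub hg)

lemma L2norm_sub_le (hL : 0 ≤ L) (hf : ContinuousOn f (Icc 0 L))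
    (hg : ContinuousOn g (Icc 0 L)) : L2norm L (f - g) ≤ L2norm L f + L2norm L g := by
  have h := L2norm_le_add_sub hL (hf.sub hg) hf
  have e : L2norm L (f - g - f) = L2norm L g := by simp [L2norm]
  rwa [e] at h

lemma abs_L2norm_sub_L2norm_le (hL : 0 ≤ L) (hf : ContinuousOn f (Icc 0 L))
    (hg : ContinuousOn g (Icc 0 L)) : |L2norm L f - L2norm L g| ≤ L2norm L (f - g) := by
  have h₁ := L2norm_le_add_sub hL hf hg
  have h₂ := L2norm_le_add_sub hL hg hf
  rw [L2norm_sub_comm] at h₂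
  exact abs_sub_le_iff.2 ⟨by linarith, by linarith⟩

lemma L2norm_mono (hL : 0 ≤ L) (hf : ContinuousOn f (Icc 0 L)) (hg : ContinuousOn g (Icc 0 L))
    (h : ∀ x ∈ Ioo 0 L, |f x| ≤ |g x|) : L2norm L f ≤ L2norm L g :=
  Real.sqrt_le_sqrt <| intervalIntegral.integral_mono_on_of_le_Ioo hL
    ((hf.pow 2).intervalIntegrable_of_Icc hL) ((hg.pow 2).intervalIntegrable_of_Icc hL)
    fun x hx => sq_le_sq.2 (h x hx)

lemma L2norm_mul_le (hL : 0 ≤ L) (hf : ContinuousOn f (Icc 0 L)) (hg : ContinuousOn g (Icc 0 L))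
    {m : ℝ} (hm : ∀ x ∈ Icc 0 L, |f x| ≤ m) : L2norm L (f * g) ≤ m * L2norm L g := by
  have hm₀ : 0 ≤ m := (abs_nonneg _).trans (hm 0 (left_mem_Icc.2 hL))
  calc L2norm L (f * g) ≤ L2norm L fun x => m * g x := by
        refine L2norm_mono hL (hf.mul hg) (continuousOn_const.mul hg) fun x hx => ?_
        rw [Pi.mul_apply, abs_mul, abs_mul, abs_of_nonneg hm₀]
        gcongr
        exact hm x (Ioo_subset_Icc_self hx)
    _ = m * L2norm L g := by rw [L2norm_const_mul, abs_of_nonneg hm₀]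

lemma L2norm_le_of_abs_le (hL : 0 ≤ L) (hf : ContinuousOn f (Icc 0 L)) {m : ℝ}
    (hm : ∀ x ∈ Ioo 0 L, |f x| ≤ m) : L2norm L f ≤ |m| * √L := by
  refine (L2norm_mono hL hf (g := fun _ => m) continuousOn_const
    fun x hx => (hm x hx).trans (le_abs_self m)).trans_eq ?_
  rw [L2norm, intervalIntegral.integral_const, smul_eq_mul, sub_zero, mul_comm,
    Real.sqrt_mul (sq_nonneg m), Real.sqrt_sq_eq_abs]

lemma L2norm_le_of_tendsto (hL : 0 ≤ L) {ι : Type*} {l : Filter ι} [l.NeBot]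
    [l.IsCountablyGenerated] {F : ι → ℝ → ℝ} {m : ℝ} (hF : ∀ i, ContinuousOn (F i) (Icc 0 L))
    (hf : ContinuousOn f (Icc 0 L))
    (hlim : ∀ x ∈ Ioo 0 L, Tendsto (fun i => F i x) l (𝓝 (f x)))
    (hm : ∀ᶠ i in l, L2norm L (F i) ≤ m) : L2norm L f ≤ m := by
  obtain ⟨i, hi⟩ := hm.exists
  have hlim' : ∀ᵐ x ∂volume.restrict (Ioc 0 L), Tendsto (fun i => F i x) l (𝓝 (f x)) := by
    rw [← restrict_Ioo_eq_restrict_Ioc]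
    exact ae_restrict_of_forall_mem measurableSet_Ioo hlim
  have hm' : ∀ᶠ i in l, eLpNorm (F i) 2 (volume.restrict (Ioc 0 L)) ≤ ENNReal.ofReal m :=
    hm.mono fun i hi => by
      rw [eLpNorm_eq_ofReal_L2norm hL (hF i)]
      exact ENNReal.ofReal_le_ofReal hi
  have hfatou := Lp.eLpNorm_le_of_ae_tendsto hm'
    (fun i => (memLp_two_of_continuousOn_Icc (hF i)).1) hlim'
  rw [eLpNorm_eq_ofReal_L2norm hL hf] at hfatou
  exact (ENNReal.ofReal_le_ofReal_iff ((L2norm_nonneg _ _).trans hi)).1 hfatou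

lemma L2norm_deriv_le_of_eventually_le (hL : 0 ≤ L) {u : ℝ → ℝ → ℝ} {t m : ℝ}
    (hu : ∀ s, ContinuousOn (u s) (Icc 0 L)) (hf : ContinuousOn f (Icc 0 L))
    (hderiv : ∀ x ∈ Ioo 0 L, HasDerivAt (fun s => u s x) (f x) t)
    (hm : ∀ᶠ r in 𝓝[>] 0, L2norm L (u (t + r) - u t) ≤ m * r) : L2norm L f ≤ m := by
  refine L2norm_le_of_tendsto hL (l := 𝓝[>] (0 : ℝ)) (F := fun r x => r⁻¹ * (u (t + r) - u t) x)
    (fun r => continuousOn_const.mul ((hu _).sub (hu _))) hf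
    (fun x hx => (hderiv x hx).tendsto_slope_zero_right) ?_
  filter_upwards [hm, self_mem_nhdsWithin] with r hr hr₀
  rwa [L2norm_const_mul, abs_of_pos (inv_pos.2 hr₀), inv_mul_le_iff₀ hr₀, mul_comm]

end L2norm

/-! ### KdV profiles and interpolation inequalities -/

/-- The `k`-th spatial derivative of a function on `[0,L]`, one-sided at the end points. -/
noncomputable def spaceDeriv (L : ℝ) (k : ℕ) (f : ℝ → ℝ) : ℝ → ℝ :=
  iteratedDerivWithin k f (Icc 0 L)

notation:max "∂[" L "," k "]" => spaceDeriv L k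

/-- A spatial profile of the KdV equation: a `C³` function on `[0,L]` satisfying the boundary
conditions `f(0) = f(L) = f'(L) = 0`. -/
structure IsKdVProfile (L : ℝ) (f : ℝ → ℝ) : Prop where
  length_pos : 0 < L
  contDiffOn : ContDiffOn ℝ 3 f (Icc 0 L)
  map_zero : f 0 = 0
  map_length : f L = 0
  deriv_length : ∂[L,1] f L = 0

section Calculus

variable {L : ℝ} {f f' g g' : ℝ → ℝ}

lemma integral_congr_Ioo (hL : 0 ≤ L) (h : EqOn f g (Ioo 0 L)) :
    ∫ x in (0 : ℝ)..L, f x = ∫ x in (0 : ℝ)..L, g x := by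
  rw [intervalIntegral.integral_of_le hL, intervalIntegral.integral_of_le hL,
    integral_Ioc_eq_integral_Ioo, integral_Ioc_eq_integral_Ioo]
  exact setIntegral_congr_fun measurableSet_Ioo h

lemma integral_mul_deriv_of_continuousOn_Icc (hL : 0 ≤ L) (hf : ContinuousOn f (Icc 0 L))
    (hf' : ContinuousOn f' (Icc 0 L)) (hff' : ∀ x ∈ Ioo 0 L, HasDerivAt f (f' x) x)
    (hg : ContinuousOn g (Icc 0 L)) (hg' : ContinuousOn g' (Icc 0 L))
    (hgg' : ∀ x ∈ Ioo 0 L, HasDerivAt g (g' x) x) :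
    ∫ x in (0 : ℝ)..L, f x * g' x = f L * g L - f 0 * g 0 - ∫ x in (0 : ℝ)..L, f' x * g x :=
  intervalIntegral.integral_mul_deriv_eq_deriv_mul_of_hasDerivAt
    (by rwa [uIcc_of_le hL]) (by rwa [uIcc_of_le hL])
    (by rwa [min_eq_left hL, max_eq_right hL]) (by rwa [min_eq_left hL, max_eq_right hL])
    (hf'.intervalIntegrable_of_Icc hL) (hg'.intervalIntegrable_of_Icc hL)

lemma sq_le_two_mul_L2norm_mul_L2norm (hf : ContinuousOn f (Icc 0 L))
    (hf' : ContinuousOn f' (Icc 0 L)) (hff' : ∀ x ∈ Ioo 0 L, HasDerivAt f (f' x) x)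
    {a x : ℝ} (ha : a ∈ Icc 0 L) (hfa : f a = 0) (hx : x ∈ Icc 0 L) :
    f x ^ 2 ≤ 2 * (L2norm L f * L2norm L f') := by
  have hL : 0 ≤ L := ha.1.trans ha.2
  have hsub : uIcc a x ⊆ Icc 0 L := uIcc_subset_Icc ha hx
  have hcont : ContinuousOn (fun y => 2 * (f y * f' y)) (Icc 0 L) := by fun_prop
  have hIoo : Ioo (min a x) (max a x) ⊆ Ioo 0 L :=
    Ioo_subset_Ioo (le_min ha.1 hx.1) (max_le ha.2 hx.2)
  have hftc : ∫ y in a..x, 2 * (f y * f' y) = f x ^ 2 := by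
    rw [intervalIntegral.integral_eq_sub_of_hasDeriv_right (f := fun y => f y ^ 2)
      ((hf.pow 2).mono hsub) (fun y hy => ?_) (hcont.mono hsub).intervalIntegrable, hfa]
    · simp
    · exact (((hff' y (hIoo hy)).fun_pow 2).congr_deriv (by ring)).hasDerivWithinAt
  calc f x ^ 2 ≤ |∫ y in a..x, 2 * (f y * f' y)| := by rw [hftc]; exact le_abs_self _
    _ ≤ ∫ y in (0 : ℝ)..L, |2 * (f y * f' y)| := by
        refine (intervalIntegral.norm_integral_le_integral_norm_uIoc
          (f := fun y => 2 * (f y * f' y))).trans ?_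
        rw [intervalIntegral.integral_of_le hL]
        exact setIntegral_mono_set (hcont.abs.integrableOn_Icc.mono_set Ioc_subset_Icc_self)
          (Eventually.of_forall fun _ => abs_nonneg _)
          (LE.le.eventuallyLE (Ioc_subset_Ioc (le_min ha.1 hx.1) (max_le ha.2 hx.2)))
    _ = 2 * ∫ y in (0 : ℝ)..L, |f y| * |f' y| := by
        simp_rw [abs_mul, abs_two, intervalIntegral.integral_const_mul]
    _ ≤ 2 * (L2norm L f * L2norm L f') := by
        rw [← L2norm_abs L f, ← L2norm_abs L f']
        gcongr
        exact (le_abs_self _).trans (abs_integral_mul_le_L2norm hL hf.abs hf'.abs)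

end Calculus

namespace IsKdVProfile

variable {L : ℝ} {f g : ℝ → ℝ}

lemma continuousOn_deriv (h : IsKdVProfile L f) (k : ℕ) (hk : k ≤ 3 := by norm_num) :
    ContinuousOn (∂[L,k] f) (Icc 0 L) :=
  h.contDiffOn.continuousOn_iteratedDerivWithin (mod_cast hk) (uniqueDiffOn_Icc h.length_pos)

lemma continuousOn (h : IsKdVProfile L f) : ContinuousOn f (Icc 0 L) := h.contDiffOn.continuousOn

lemma hasDerivAt_deriv (h : IsKdVProfile L f) (k : ℕ) {x : ℝ} (hx : x ∈ Ioo 0 L)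
    (hk : k < 3 := by norm_num) : HasDerivAt (∂[L,k] f) (∂[L,k+1] f x) x := by
  have hd := h.contDiffOn.differentiableOn_iteratedDerivWithin (m := k) (mod_cast hk)
    (uniqueDiffOn_Icc h.length_pos) x (Ioo_subset_Icc_self hx)
  rw [spaceDeriv, spaceDeriv, iteratedDerivWithin_succ]
  exact hd.hasDerivWithinAt.hasDerivAt (Icc_mem_nhds hx.1 hx.2)

lemma hasDerivAt (h : IsKdVProfile L f) {x : ℝ} (hx : x ∈ Ioo 0 L) :
    HasDerivAt f (∂[L,1] f x) x := by
  simpa [spaceDeriv] using h.hasDerivAt_deriv 0 hx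

lemma zero (hL : 0 < L) : IsKdVProfile L 0 where
  length_pos := hL
  contDiffOn := contDiffOn_const
  map_zero := rfl
  map_length := rfl
  deriv_length := by simp [spaceDeriv]

lemma deriv_sub (hf : IsKdVProfile L f) (hg : IsKdVProfile L g) (k : ℕ) {x : ℝ}
    (hx : x ∈ Icc 0 L) (hk : k ≤ 3 := by norm_num) :
    ∂[L,k] (f - g) x = ∂[L,k] f x - ∂[L,k] g x :=
  iteratedDerivWithin_sub hx (uniqueDiffOn_Icc hf.length_pos)
    ((hf.contDiffOn x hx).of_le (mod_cast hk)) ((hg.contDiffOn x hx).of_le (mod_cast hk))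

lemma sub (hf : IsKdVProfile L f) (hg : IsKdVProfile L g) : IsKdVProfile L (f - g) where
  length_pos := hf.length_pos
  contDiffOn := hf.contDiffOn.sub hg.contDiffOn
  map_zero := by simp [hf.map_zero, hg.map_zero]
  map_length := by simp [hf.map_length, hg.map_length]
  deriv_length := by
    rw [hf.deriv_sub hg 1 (right_mem_Icc.2 hf.length_pos.le), hf.deriv_length, hg.deriv_length,
      sub_zero]

lemma sq_le (h : IsKdVProfile L f) {x : ℝ} (hx : x ∈ Icc 0 L) :
    f x ^ 2 ≤ 2 * (L2norm L f * L2norm L (∂[L,1] f)) :=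
  sq_le_two_mul_L2norm_mul_L2norm h.continuousOn (h.continuousOn_deriv 1)
    (fun _ => h.hasDerivAt) (left_mem_Icc.2 h.length_pos.le) h.map_zero hx

lemma deriv_one_sq_le (h : IsKdVProfile L f) {x : ℝ} (hx : x ∈ Icc 0 L) :
    ∂[L,1] f x ^ 2 ≤ 2 * (L2norm L (∂[L,1] f) * L2norm L (∂[L,2] f)) :=
  sq_le_two_mul_L2norm_mul_L2norm (h.continuousOn_deriv 1) (h.continuousOn_deriv 2)
    (fun _ hx => h.hasDerivAt_deriv 1 hx) (right_mem_Icc.2 h.length_pos.le) h.deriv_length hx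

lemma exists_deriv_two_eq_zero (h : IsKdVProfile L f) : ∃ x ∈ Ioo 0 L, ∂[L,2] f x = 0 := by
  obtain ⟨ξ, hξ, hξ₀⟩ := exists_hasDerivAt_eq_zero h.length_pos h.continuousOn
    (h.map_zero.trans h.map_length.symm) fun _ => h.hasDerivAt
  obtain ⟨ζ, hζ, hζ₀⟩ := exists_hasDerivAt_eq_zero hξ.2
    ((h.continuousOn_deriv 1).mono (Icc_subset_Icc_left hξ.1.le)) (hξ₀.trans h.deriv_length.symm)
    fun x hx => h.hasDerivAt_deriv 1 ⟨hξ.1.trans hx.1, hx.2⟩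
  exact ⟨ζ, ⟨hξ.1.trans hζ.1, hζ.2⟩, hζ₀⟩

lemma deriv_two_sq_le (h : IsKdVProfile L f) {x : ℝ} (hx : x ∈ Icc 0 L) :
    ∂[L,2] f x ^ 2 ≤ 2 * (L2norm L (∂[L,2] f) * L2norm L (∂[L,3] f)) := by
  obtain ⟨ζ, hζ, hζ₀⟩ := h.exists_deriv_two_eq_zero
  exact sq_le_two_mul_L2norm_mul_L2norm (h.continuousOn_deriv 2) (h.continuousOn_deriv 3)
    (fun _ hx => h.hasDerivAt_deriv 2 hx) (Ioo_subset_Icc_self hζ) hζ₀ hx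

lemma L2norm_deriv_one_sq_le (h : IsKdVProfile L f) :
    L2norm L (∂[L,1] f) ^ 2 ≤ L2norm L f * L2norm L (∂[L,2] f) := by
  have hL := h.length_pos.le
  have hibp := integral_mul_deriv_of_continuousOn_Icc hL h.continuousOn (h.continuousOn_deriv 1)
    (fun _ => h.hasDerivAt) (h.continuousOn_deriv 1) (h.continuousOn_deriv 2)
    fun _ hx => h.hasDerivAt_deriv 1 hx
  have hcs := abs_le.1 (abs_integral_mul_le_L2norm hL h.continuousOn (h.continuousOn_deriv 2))
  simp_rw [h.map_zero, h.map_length, ← sq, ← sq_L2norm hL] at hibp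
  linarith

lemma L2norm_deriv_two_sq_le (h : IsKdVProfile L f) :
    L2norm L (∂[L,2] f) ^ 2 ≤ 6 * (L2norm L (∂[L,1] f) * L2norm L (∂[L,3] f)) := by
  have hL := h.length_pos.le
  have hibp := integral_mul_deriv_of_continuousOn_Icc hL (h.continuousOn_deriv 1)
    (h.continuousOn_deriv 2) (fun _ hx => h.hasDerivAt_deriv 1 hx) (h.continuousOn_deriv 2)
    (h.continuousOn_deriv 3) fun _ hx => h.hasDerivAt_deriv 2 hx
  have hcs := abs_le.1
    (abs_integral_mul_le_L2norm hL (h.continuousOn_deriv 1) (h.continuousOn_deriv 3))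
  have h₁ := h.deriv_one_sq_le (left_mem_Icc.2 hL)
  have h₂ := h.deriv_two_sq_le (left_mem_Icc.2 hL)
  simp_rw [h.deriv_length, ← sq, ← sq_L2norm hL] at hibp
  have ha := L2norm_nonneg L (∂[L,1] f)
  have hb := L2norm_nonneg L (∂[L,2] f)
  have hc := L2norm_nonneg L (∂[L,3] f)
  set a := L2norm L (∂[L,1] f)
  set b := L2norm L (∂[L,2] f)
  set c := L2norm L (∂[L,3] f)
  have hg : √(a * c) ^ 2 = a * c := Real.sq_sqrt (by positivity)
  have htrace : |∂[L,1] f 0 * ∂[L,2] f 0| ≤ 2 * b * √(a * c) := by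
    refine abs_le_of_sq_le_sq ?_ (by positivity)
    calc (∂[L,1] f 0 * ∂[L,2] f 0) ^ 2 = ∂[L,1] f 0 ^ 2 * ∂[L,2] f 0 ^ 2 := mul_pow _ _ _
      _ ≤ (2 * (a * b)) * (2 * (b * c)) := by gcongr
      _ = 4 * b ^ 2 * (a * c) := by ring
      _ = (2 * b * √(a * c)) ^ 2 := by rw [mul_pow, hg]; ring
  nlinarith [sq_nonneg (b - 2 * √(a * c)), neg_abs_le (∂[L,1] f 0 * ∂[L,2] f 0)]

lemma L2norm_deriv_one_pow_three_le (h : IsKdVProfile L f) :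
    L2norm L (∂[L,1] f) ^ 3 ≤ 6 * L2norm L (∂[L,3] f) * L2norm L f ^ 2 := by
  have h₁ := h.L2norm_deriv_one_sq_le
  have h₂ := h.L2norm_deriv_two_sq_le
  have hc := L2norm_nonneg L (∂[L,3] f)
  set a := L2norm L (∂[L,1] f)
  have ha₀ : 0 ≤ a := L2norm_nonneg L _
  rcases ha₀.eq_or_lt with ha | ha
  · rw [← ha, zero_pow three_ne_zero]
    positivity
  · refine le_of_mul_le_mul_left ?_ ha
    calc a * a ^ 3 = (a ^ 2) ^ 2 := by ring
      _ ≤ (L2norm L f * L2norm L (∂[L,2] f)) ^ 2 := by gcongr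
      _ = L2norm L f ^ 2 * L2norm L (∂[L,2] f) ^ 2 := mul_pow _ _ _
      _ ≤ L2norm L f ^ 2 * (6 * (a * L2norm L (∂[L,3] f))) := by gcongr
      _ = a * (6 * L2norm L (∂[L,3] f) * L2norm L f ^ 2) := by ring

lemma L2norm_deriv_two_pow_three_le (h : IsKdVProfile L f) :
    L2norm L (∂[L,2] f) ^ 3 ≤ 36 * L2norm L (∂[L,3] f) ^ 2 * L2norm L f := by
  have hc := L2norm_nonneg L (∂[L,3] f)
  have he := L2norm_nonneg L f
  refine le_of_sq_le_sq ?_ (by positivity)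
  calc (L2norm L (∂[L,2] f) ^ 3) ^ 2 = (L2norm L (∂[L,2] f) ^ 2) ^ 3 := by ring
    _ ≤ (6 * (L2norm L (∂[L,1] f) * L2norm L (∂[L,3] f))) ^ 3 := by
        gcongr
        exact h.L2norm_deriv_two_sq_le
    _ = 216 * L2norm L (∂[L,3] f) ^ 3 * L2norm L (∂[L,1] f) ^ 3 := by ring
    _ ≤ 216 * L2norm L (∂[L,3] f) ^ 3 * (6 * L2norm L (∂[L,3] f) * L2norm L f ^ 2) := by
        gcongr
        exact h.L2norm_deriv_one_pow_three_le
    _ = (36 * L2norm L (∂[L,3] f) ^ 2 * L2norm L f) ^ 2 := by ring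

lemma L2norm_le_deriv_one (h : IsKdVProfile L f) :
    L2norm L f ≤ 2 * L * L2norm L (∂[L,1] f) := by
  have hL := h.length_pos
  have ha := L2norm_nonneg L (∂[L,1] f)
  have hsq : L2norm L f ^ 2 ≤ L * (2 * (L2norm L f * L2norm L (∂[L,1] f))) := by
    rw [sq_L2norm hL.le]
    refine (intervalIntegral.integral_mono_on hL.le
      ((h.continuousOn.pow 2).intervalIntegrable_of_Icc hL.le) (by simp)
      fun x => h.sq_le).trans_eq ?_
    rw [intervalIntegral.integral_const, sub_zero, smul_eq_mul]
  rcases (L2norm_nonneg L f).eq_or_lt with he | he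
  · rw [← he]
    positivity
  · nlinarith

lemma sq_le_deriv_one (h : IsKdVProfile L f) {x : ℝ} (hx : x ∈ Icc 0 L) :
    f x ^ 2 ≤ 4 * L * L2norm L (∂[L,1] f) ^ 2 := by
  nlinarith [h.sq_le hx, h.L2norm_le_deriv_one, L2norm_nonneg L (∂[L,1] f)]

lemma L2norm_mul_sq_le (h : IsKdVProfile L f) (hg : ContinuousOn g (Icc 0 L)) :
    L2norm L (f * g) ^ 2 ≤ 2 * (L2norm L f * L2norm L (∂[L,1] f)) * L2norm L g ^ 2 := by
  have hprod := L2norm_mul_le h.length_pos.le h.continuousOn hg fun x hx =>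
    Real.abs_le_sqrt (h.sq_le hx)
  have he := L2norm_nonneg L f
  have ha := L2norm_nonneg L (∂[L,1] f)
  calc L2norm L (f * g) ^ 2 ≤ (√(2 * (L2norm L f * L2norm L (∂[L,1] f))) * L2norm L g) ^ 2 := by
        gcongr
        exact L2norm_nonneg L _
    _ = 2 * (L2norm L f * L2norm L (∂[L,1] f)) * L2norm L g ^ 2 := by
        rw [mul_pow, Real.sq_sqrt (by positivity)]

end IsKdVProfile

/-! ### The stationary KdV operator -/

/-- The spatial part `f' + f''' + φ f f'` of the KdV equation with nonlinearity coefficient `φ`. -/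
noncomputable def kdvOp (L φ : ℝ) (f : ℝ → ℝ) (x : ℝ) : ℝ :=
  ∂[L,1] f x + ∂[L,3] f x + φ * (f x * ∂[L,1] f x)

lemma kdvOp_zero (L φ x : ℝ) : kdvOp L φ 0 x = 0 := by
  simp [kdvOp, spaceDeriv, iteratedDerivWithin_const_zero]

/-- The flux `f'' + f + φ f² / 2`, whose derivative is `kdvOp L φ f`. -/
noncomputable def kdvFlux (L φ : ℝ) (f : ℝ → ℝ) (x : ℝ) : ℝ :=
  ∂[L,2] f x + f x + φ * (f x ^ 2 / 2)

lemma le_div_four_add_of_pow_three_le {a c e : ℝ} (hc : 0 ≤ c) (he : 0 ≤ e)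
    (h : a ^ 3 ≤ 6 * c * e ^ 2) : a ≤ c / 4 + 5 * e := by
  by_contra! hlt
  have hcube : (c / 4 + 5 * e) ^ 3 < a ^ 3 := by gcongr
  have : 0 ≤ c ^ 3 := by positivity
  have : 0 ≤ c ^ 2 * e := by positivity
  have : 0 ≤ e ^ 3 := by positivity
  have : 0 ≤ c * e ^ 2 := by positivity
  nlinarith

lemma add_add_pow_three_le {a b c : ℝ} (ha : 0 ≤ a) (hb : 0 ≤ b) (hc : 0 ≤ c) :
    (a + b + c) ^ 3 ≤ 9 * (a ^ 3 + b ^ 3 + c ^ 3) := by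
  nlinarith [mul_nonneg (add_nonneg ha hb) (sq_nonneg (a - b)),
    mul_nonneg (add_nonneg ha hc) (sq_nonneg (a - c)),
    mul_nonneg (add_nonneg hb hc) (sq_nonneg (b - c)), mul_nonneg ha (sq_nonneg (b - c)),
    mul_nonneg hb (sq_nonneg (a - c)), mul_nonneg hc (sq_nonneg (a - b))]

namespace IsKdVProfile

variable {L φ : ℝ} {f g z : ℝ → ℝ}

lemma continuousOn_kdvOp (h : IsKdVProfile L f) (φ : ℝ) :
    ContinuousOn (kdvOp L φ f) (Icc 0 L) :=
  ((h.continuousOn_deriv 1).add (h.continuousOn_deriv 3)).add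
    (continuousOn_const.mul (h.continuousOn.mul (h.continuousOn_deriv 1)))

lemma continuousOn_kdvFlux (h : IsKdVProfile L f) (φ : ℝ) :
    ContinuousOn (kdvFlux L φ f) (Icc 0 L) :=
  ((h.continuousOn_deriv 2).add h.continuousOn).add
    (continuousOn_const.mul ((h.continuousOn.pow 2).div_const 2))

lemma hasDerivAt_kdvFlux (h : IsKdVProfile L f) (φ : ℝ) {x : ℝ} (hx : x ∈ Ioo 0 L) :
    HasDerivAt (kdvFlux L φ f) (kdvOp L φ f x) x :=
  (((h.hasDerivAt_deriv 2 hx).fun_add (h.hasDerivAt hx)).fun_add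
    ((((h.hasDerivAt hx).fun_pow 2).div_const 2).const_mul φ)).congr_deriv (by rw [kdvOp]; ring)

lemma integral_mul_neg_kdvOp (hz : IsKdVProfile L z) (hf : IsKdVProfile L f) (φ : ℝ) :
    ∫ x in (0 : ℝ)..L, z x * -kdvOp L φ f x = ∫ x in (0 : ℝ)..L, ∂[L,1] z x * kdvFlux L φ f x := by
  have hibp := integral_mul_deriv_of_continuousOn_Icc hz.length_pos.le hz.continuousOn
    (hz.continuousOn_deriv 1) (fun _ => hz.hasDerivAt) (hf.continuousOn_kdvFlux φ)
    (hf.continuousOn_kdvOp φ) fun _ => hf.hasDerivAt_kdvFlux φ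
  simp_rw [mul_neg, intervalIntegral.integral_neg, hibp, hz.map_zero, hz.map_length]
  ring

lemma integral_mul_neg_kdvOp_le (hz : IsKdVProfile L z) (hf : IsKdVProfile L f) (φ : ℝ) :
    ∫ x in (0 : ℝ)..L, z x * -kdvOp L φ f x ≤
      L2norm L (∂[L,1] z) * L2norm L (kdvFlux L φ f) := by
  rw [integral_mul_neg_kdvOp hz hf]
  exact (le_abs_self _).trans (abs_integral_mul_le_L2norm hz.length_pos.le
    (hz.continuousOn_deriv 1) (hf.continuousOn_kdvFlux φ))

lemma integral_self_mul_neg_kdvOp_nonpos (h : IsKdVProfile L f) (φ : ℝ) :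
    ∫ x in (0 : ℝ)..L, f x * -kdvOp L φ f x ≤ 0 := by
  have hL := h.length_pos.le
  have c := h.continuousOn
  have c₁ := h.continuousOn_deriv 1
  have c_flux := h.continuousOn_kdvFlux φ
  rw [integral_mul_neg_kdvOp h h,
    intervalIntegral.integral_eq_sub_of_hasDerivAt_of_le hL
      (f := fun x => ∂[L,1] f x ^ 2 / 2 + f x ^ 2 / 2 + φ * f x ^ 3 / 6)
      (f' := fun x => ∂[L,1] f x * kdvFlux L φ f x) (by fun_prop)
      (fun x hx => ?_) (ContinuousOn.intervalIntegrable_of_Icc hL (by fun_prop)),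
    h.map_zero, h.map_length, h.deriv_length]
  · linarith [sq_nonneg (∂[L,1] f 0)]
  · exact (((((h.hasDerivAt_deriv 1 hx).fun_pow 2).div_const 2).fun_add
      (((h.hasDerivAt hx).fun_pow 2).div_const 2)).fun_add
      ((((h.hasDerivAt hx).fun_pow 3).const_mul φ).div_const 6)).congr_deriv
        (by rw [kdvFlux]; norm_num; ring)

lemma L2norm_deriv_one_sq_le_add_sub (hf : IsKdVProfile L f) (hg : IsKdVProfile L g) :
    L2norm L (∂[L,1] f) ^ 2 ≤ L2norm L (∂[L,1] g) * L2norm L (∂[L,1] f) +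
      L2norm L (f - g) * L2norm L (∂[L,2] f) := by
  have hL := hf.length_pos.le
  have hz := hf.sub hg
  have c₁ := hf.continuousOn_deriv 1
  have d₁ := hg.continuousOn_deriv 1
  have hibp := integral_mul_deriv_of_continuousOn_Icc hL hz.continuousOn (hz.continuousOn_deriv 1)
    (fun _ => hz.hasDerivAt) c₁ (hf.continuousOn_deriv 2) fun _ hx => hf.hasDerivAt_deriv 1 hx
  have hsplit : ∫ x in (0 : ℝ)..L, ∂[L,1] (f - g) x * ∂[L,1] f x =
      L2norm L (∂[L,1] f) ^ 2 - ∫ x in (0 : ℝ)..L, ∂[L,1] g x * ∂[L,1] f x := by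
    rw [sq_L2norm hL, ← intervalIntegral.integral_sub
      (ContinuousOn.intervalIntegrable_of_Icc hL (by fun_prop))
      (ContinuousOn.intervalIntegrable_of_Icc hL (by fun_prop))]
    refine integral_congr_Ioo hL fun x hx => ?_
    simp only [hf.deriv_sub hg 1 (Ioo_subset_Icc_self hx)]
    ring
  rw [hsplit, hz.map_zero, hz.map_length] at hibp
  have h₁ := abs_le.1 (abs_integral_mul_le_L2norm hL d₁ c₁)
  have h₂ := abs_le.1 (abs_integral_mul_le_L2norm hL hz.continuousOn (hf.continuousOn_deriv 2))
  linarith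

lemma L2norm_deriv_three_le (h : IsKdVProfile L f) (hφ : φ ∈ Icc (0 : ℝ) 1) :
    L2norm L (∂[L,3] f) ≤
      2 * L2norm L (kdvOp L φ f) + 10 * L2norm L f + 48 * L2norm L f ^ 3 := by
  have hL := h.length_pos.le
  have c₁ := h.continuousOn_deriv 1
  have hc := L2norm_nonneg L (∂[L,3] f)
  have he := L2norm_nonneg L f
  have hq := L2norm_nonneg L (f * ∂[L,1] f)
  have htriangle : L2norm L (∂[L,3] f) ≤
      L2norm L (kdvOp L φ f) + (L2norm L (∂[L,1] f) + φ * L2norm L (f * ∂[L,1] f)) := by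
    have hlow : ContinuousOn (fun x => φ * (f * ∂[L,1] f) x) (Icc 0 L) :=
      continuousOn_const.mul (h.continuousOn.mul c₁)
    have h₁ := L2norm_sub_le hL (h.continuousOn_kdvOp φ) (c₁.add hlow)
    have h₂ := L2norm_add_le hL c₁ hlow
    have hcongr : L2norm L (∂[L,3] f) =
        L2norm L (kdvOp L φ f - (∂[L,1] f + fun x => φ * (f * ∂[L,1] f) x)) :=
      L2norm_congr hL fun x _ => by
        simp only [kdvOp, Pi.sub_apply, Pi.add_apply, Pi.mul_apply]
        ring
    rw [L2norm_const_mul, abs_of_nonneg hφ.1] at h₂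
    linarith
  have hgrad := le_div_four_add_of_pow_three_le hc he h.L2norm_deriv_one_pow_three_le
  have hprod : L2norm L (f * ∂[L,1] f) ≤ L2norm L (∂[L,3] f) / 4 + 24 * L2norm L f ^ 3 := by
    refine le_of_sq_le_sq ?_ (by positivity)
    calc L2norm L (f * ∂[L,1] f) ^ 2
        ≤ 2 * (L2norm L f * L2norm L (∂[L,1] f)) * L2norm L (∂[L,1] f) ^ 2 := h.L2norm_mul_sq_le c₁
      _ = 2 * L2norm L f * L2norm L (∂[L,1] f) ^ 3 := by ring
      _ ≤ 2 * L2norm L f * (6 * L2norm L (∂[L,3] f) * L2norm L f ^ 2) := by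
          gcongr
          exact h.L2norm_deriv_one_pow_three_le
      _ ≤ (L2norm L (∂[L,3] f) / 4 + 24 * L2norm L f ^ 3) ^ 2 := by
          nlinarith [sq_nonneg (L2norm L (∂[L,3] f) / 4), sq_nonneg (L2norm L f ^ 3)]
  have hφq := mul_le_of_le_one_left hq hφ.2
  linarith

lemma L2norm_self_mul_self_pow_three_le (h : IsKdVProfile L f) (hf : L2norm L f ≤ 1) :
    L2norm L (f * f) ^ 3 ≤ 5 * (L2norm L (∂[L,3] f) ^ 2 + L2norm L f ^ 2) * L2norm L f := by
  have hc := L2norm_nonneg L (∂[L,3] f)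
  have he := L2norm_nonneg L f
  have ha := L2norm_nonneg L (∂[L,1] f)
  have hcube := h.L2norm_deriv_one_pow_three_le
  have hsq := h.L2norm_mul_sq_le h.continuousOn
  set a := L2norm L (∂[L,1] f)
  set c := L2norm L (∂[L,3] f)
  set e := L2norm L f
  refine le_of_sq_le_sq ?_ (by positivity)
  calc (L2norm L (f * f) ^ 3) ^ 2 = (L2norm L (f * f) ^ 2) ^ 3 := by ring
    _ ≤ (2 * (e * a) * e ^ 2) ^ 3 := by gcongr
    _ = 8 * e ^ 9 * a ^ 3 := by ring
    _ ≤ 8 * e ^ 9 * (6 * c * e ^ 2) := by gcongr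
    _ = 48 * c * e ^ 5 * e ^ 6 := by ring
    _ ≤ 48 * c * e ^ 5 * 1 := by gcongr; exact pow_le_one₀ he hf
    _ = 24 * e ^ 2 * (2 * c * e) * e ^ 2 := by ring
    _ ≤ 24 * e ^ 2 * (c ^ 2 + e ^ 2) * (c ^ 2 + e ^ 2) := by
        gcongr
        · exact two_mul_le_add_sq c e
        · exact le_add_of_nonneg_left (sq_nonneg c)
    _ ≤ (5 * (c ^ 2 + e ^ 2) * e) ^ 2 := by
        nlinarith [mul_nonneg (sq_nonneg e) (sq_nonneg (c ^ 2 + e ^ 2))]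

lemma L2norm_kdvFlux_pow_three_le (h : IsKdVProfile L f) (hφ : φ ∈ Icc (0 : ℝ) 1)
    (hf : L2norm L f ≤ 1) :
    L2norm L (kdvFlux L φ f) ^ 3 ≤
      400 * (L2norm L (∂[L,3] f) ^ 2 + L2norm L f ^ 2) * L2norm L f := by
  have hL := h.length_pos.le
  have c := h.continuousOn
  have c₂ := h.continuousOn_deriv 2
  have hb := L2norm_nonneg L (∂[L,2] f)
  have he := L2norm_nonneg L f
  have hq := L2norm_nonneg L (f * f)
  have htriangle : L2norm L (kdvFlux L φ f) ≤
      L2norm L (∂[L,2] f) + L2norm L f + L2norm L (f * f) := by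
    have hquad : ContinuousOn (fun x => φ / 2 * (f * f) x) (Icc 0 L) :=
      continuousOn_const.mul (c.mul c)
    have h₁ := L2norm_add_le hL (c₂.add c) hquad
    have h₂ := L2norm_add_le hL c₂ c
    have hcongr : L2norm L (kdvFlux L φ f) =
        L2norm L (∂[L,2] f + f + fun x => φ / 2 * (f * f) x) :=
      L2norm_congr hL fun x _ => by simp only [kdvFlux, Pi.add_apply, Pi.mul_apply]; ring
    rw [L2norm_const_mul, abs_of_nonneg (by linarith [hφ.1])] at h₁
    have hφq := mul_le_of_le_one_left hq (show φ / 2 ≤ 1 by linarith [hφ.2])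
    linarith
  calc L2norm L (kdvFlux L φ f) ^ 3
      ≤ (L2norm L (∂[L,2] f) + L2norm L f + L2norm L (f * f)) ^ 3 := by
        gcongr
        exact L2norm_nonneg L _
    _ ≤ 9 * (L2norm L (∂[L,2] f) ^ 3 + L2norm L f ^ 3 + L2norm L (f * f) ^ 3) :=
        add_add_pow_three_le hb he hq
    _ ≤ 400 * (L2norm L (∂[L,3] f) ^ 2 + L2norm L f ^ 2) * L2norm L f := by
        nlinarith [h.L2norm_deriv_two_pow_three_le, h.L2norm_self_mul_self_pow_three_le hf,
          mul_nonneg (sq_nonneg (L2norm L (∂[L,3] f))) he, pow_nonneg he 3]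

end IsKdVProfile

/-! ### The weighted energy of a difference of profiles -/

/-- The energy with the Kato weight `1 + κx`, whose growth produces the smoothing. -/
noncomputable def weightedEnergy (L κ : ℝ) (f : ℝ → ℝ) : ℝ :=
  ∫ x in (0 : ℝ)..L, (1 + κ * x) * f x ^ 2

/-- The constant multiplying the sup norms squared of the profiles in the weighted energy
estimate for a difference. -/
noncomputable def interactionConst (κ K : ℝ) : ℝ := (κ + 1 / κ) * (K + 1) ^ 2

lemma interactionConst_nonneg {κ : ℝ} (hκ : 0 ≤ κ) (K : ℝ) : 0 ≤ interactionConst κ K := by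
  unfold interactionConst
  positivity

section weightedEnergy

variable {L κ : ℝ} {f : ℝ → ℝ}

lemma sq_L2norm_le_weightedEnergy (hL : 0 ≤ L) (hκ : 0 ≤ κ) (hf : ContinuousOn f (Icc 0 L)) :
    L2norm L f ^ 2 ≤ weightedEnergy L κ f := by
  rw [sq_L2norm hL]
  refine intervalIntegral.integral_mono_on hL
    (ContinuousOn.intervalIntegrable_of_Icc hL (by fun_prop))
    (ContinuousOn.intervalIntegrable_of_Icc hL (by fun_prop)) fun x hx => ?_
  exact le_mul_of_one_le_left (sq_nonneg _) (le_add_of_nonneg_right (mul_nonneg hκ hx.1))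

lemma abs_one_add_mul_le_two (hκ : 0 ≤ κ) (hκL : κ * L ≤ 1) {x : ℝ} (hx : x ∈ Icc 0 L) :
    |1 + κ * x| ≤ 2 := by
  rw [abs_of_nonneg (add_nonneg zero_le_one (mul_nonneg hκ hx.1))]
  linarith [mul_le_mul_of_nonneg_left hx.2 hκ]

lemma weightedEnergy_le_two_mul_sq_L2norm (hL : 0 ≤ L) (hκ : 0 ≤ κ) (hκL : κ * L ≤ 1)
    (hf : ContinuousOn f (Icc 0 L)) : weightedEnergy L κ f ≤ 2 * L2norm L f ^ 2 := by
  rw [sq_L2norm hL, ← intervalIntegral.integral_const_mul]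
  refine intervalIntegral.integral_mono_on hL
    (ContinuousOn.intervalIntegrable_of_Icc hL (by fun_prop))
    (ContinuousOn.intervalIntegrable_of_Icc hL (by fun_prop)) fun x hx => ?_
  exact mul_le_mul_of_nonneg_right ((le_abs_self _).trans (abs_one_add_mul_le_two hκ hκL hx))
    (sq_nonneg _)

end weightedEnergy

lemma L2norm_sub_mul_sq_le {L φu φv K B : ℝ} {u v : ℝ → ℝ} (hL : 0 ≤ L)
    (hu : ContinuousOn u (Icc 0 L)) (hv : ContinuousOn v (Icc 0 L)) (hφv : φv ∈ Icc (0 : ℝ) 1)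
    (hφ : |φv - φu| * L2norm L u ≤ K * L2norm L (v - u))
    (hB : ∀ x ∈ Icc 0 L, |u x| + |v x| ≤ B) (hB₀ : 0 ≤ B) :
    L2norm L (fun x => φv * v x ^ 2 - φu * u x ^ 2) ≤ (K + 1) * B * L2norm L (v - u) := by
  have hsum : L2norm L ((fun x => φv * (u x + v x)) * (v - u)) ≤ B * L2norm L (v - u) := by
    refine L2norm_mul_le hL (by fun_prop) (hv.sub hu) fun x hx => ?_
    rw [abs_mul, abs_of_nonneg hφv.1]
    exact (mul_le_of_le_one_left (abs_nonneg _) hφv.2).trans ((abs_add_le _ _).trans (hB x hx))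
  have hdiff : L2norm L (u * fun x => (φv - φu) * u x) ≤ B * (|φv - φu| * L2norm L u) := by
    rw [← L2norm_const_mul]
    exact L2norm_mul_le hL hu (by fun_prop) fun x hx => by linarith [hB x hx, abs_nonneg (v x)]
  calc L2norm L (fun x => φv * v x ^ 2 - φu * u x ^ 2)
      = L2norm L ((u * fun x => (φv - φu) * u x) + (fun x => φv * (u x + v x)) * (v - u)) :=
        L2norm_congr hL fun x _ => by simp only [Pi.add_apply, Pi.mul_apply, Pi.sub_apply]; ring
    _ ≤ L2norm L (u * fun x => (φv - φu) * u x) +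
          L2norm L ((fun x => φv * (u x + v x)) * (v - u)) :=
        L2norm_add_le hL (by fun_prop) (by fun_prop)
    _ ≤ (K + 1) * B * L2norm L (v - u) := by
        linarith [mul_le_mul_of_nonneg_left hφ hB₀]

namespace IsKdVProfile

variable {L κ K B φu φv : ℝ} {u v z : ℝ → ℝ}

lemma integral_weighted_linear_flux (h : IsKdVProfile L z) (κ : ℝ) :
    ∫ x in (0 : ℝ)..L, 2 * (κ * z x + (1 + κ * x) * ∂[L,1] z x) * (∂[L,2] z x + z x) =
      κ * L2norm L z ^ 2 - 3 * κ * L2norm L (∂[L,1] z) ^ 2 - ∂[L,1] z 0 ^ 2 := by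
  have hL := h.length_pos.le
  have c := h.continuousOn
  have c₁ := h.continuousOn_deriv 1
  have c₂ := h.continuousOn_deriv 2
  have hint : ∀ {F : ℝ → ℝ}, ContinuousOn F (Icc 0 L) → IntervalIntegrable F volume 0 L :=
    fun hF => hF.intervalIntegrable_of_Icc hL
  have hftc := intervalIntegral.integral_eq_sub_of_hasDerivAt_of_le hL
    (f := fun x => 2 * κ * (z x * ∂[L,1] z x) + (1 + κ * x) * (∂[L,1] z x ^ 2 + z x ^ 2))
    (f' := fun x => 2 * (κ * z x + (1 + κ * x) * ∂[L,1] z x) * (∂[L,2] z x + z x) -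
      (κ * z x ^ 2 - 3 * κ * ∂[L,1] z x ^ 2)) (by fun_prop) (fun x hx => ?_)
      (hint (by fun_prop))
  · rw [intervalIntegral.integral_sub (hint (by fun_prop)) (hint (by fun_prop)),
      intervalIntegral.integral_sub (hint (by fun_prop)) (hint (by fun_prop)),
      intervalIntegral.integral_const_mul, intervalIntegral.integral_const_mul,
      ← sq_L2norm hL, ← sq_L2norm hL, h.map_zero, h.map_length, h.deriv_length] at hftc
    linear_combination hftc
  · have hz := h.hasDerivAt hx
    have hz₁ := h.hasDerivAt_deriv 1 hx
    have hweight : HasDerivAt (fun x : ℝ => 1 + κ * x) κ x := by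
      simpa using ((hasDerivAt_id x).const_mul κ).const_add 1
    exact (((hz.fun_mul hz₁).const_mul (2 * κ)).fun_add
      (hweight.fun_mul ((hz₁.fun_pow 2).fun_add (hz.fun_pow 2)))).congr_deriv
        (by norm_num; ring)

lemma integral_weighted_mul_sub_kdvOp (hu : IsKdVProfile L u) (hv : IsKdVProfile L v)
    (κ φu φv : ℝ) :
    ∫ x in (0 : ℝ)..L, 2 * (1 + κ * x) * (v - u) x * -(kdvOp L φv v x - kdvOp L φu u x) =
      ∫ x in (0 : ℝ)..L, 2 * (κ * (v - u) x + (1 + κ * x) * ∂[L,1] (v - u) x) *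
        (kdvFlux L φv v x - kdvFlux L φu u x) := by
  have hz := hv.sub hu
  have c := hz.continuousOn
  have c₁ := hz.continuousOn_deriv 1
  have hibp := integral_mul_deriv_of_continuousOn_Icc hz.length_pos.le
    (f := fun x => 2 * (1 + κ * x) * (v - u) x)
    (f' := fun x => 2 * (κ * (v - u) x + (1 + κ * x) * ∂[L,1] (v - u) x))
    (by fun_prop) (by fun_prop) (fun x hx => ?_)
    ((hv.continuousOn_kdvFlux φv).sub (hu.continuousOn_kdvFlux φu))
    ((hv.continuousOn_kdvOp φv).sub (hu.continuousOn_kdvOp φu))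
    fun x hx => (hv.hasDerivAt_kdvFlux φv hx).sub (hu.hasDerivAt_kdvFlux φu hx)
  · rw [hz.map_zero, hz.map_length] at hibp
    simp only [Pi.sub_apply (kdvFlux L φv v), Pi.sub_apply (kdvOp L φv v)] at hibp
    simp_rw [mul_neg, intervalIntegral.integral_neg, hibp]
    ring
  · have hweight : HasDerivAt (fun x : ℝ => 2 * (1 + κ * x)) (2 * κ) x := by
      simpa using (((hasDerivAt_id x).const_mul κ).const_add 1).const_mul 2
    exact (hweight.fun_mul (hz.hasDerivAt hx)).congr_deriv (by ring)

lemma L2norm_deriv_weighted_le (h : IsKdVProfile L z) (hκ : 0 ≤ κ) (hκL : κ * L ≤ 1) :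
    L2norm L (fun x => κ * z x + (1 + κ * x) * ∂[L,1] z x) ≤
      κ * L2norm L z + 2 * L2norm L (∂[L,1] z) := by
  have hL := h.length_pos.le
  have c := h.continuousOn
  have c₁ := h.continuousOn_deriv 1
  have hmul := L2norm_mul_le hL (f := fun x => 1 + κ * x) (by fun_prop) c₁ fun _ =>
    abs_one_add_mul_le_two hκ hκL
  have hadd := L2norm_add_le hL (f := fun x => κ * z x)
    (g := (fun x => 1 + κ * x) * ∂[L,1] z) (by fun_prop) (by fun_prop)
  rw [L2norm_const_mul, abs_of_nonneg hκ] at hadd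
  exact hadd.trans (by linarith)

lemma young_weighted_le {a n D : ℝ} (hκ : 0 < κ) :
    (κ * n + 2 * a) * (D * n) ≤ 2 * κ * a ^ 2 + (κ + (κ + 1 / κ) * D ^ 2) * n ^ 2 := by
  have hsq : 0 ≤ 1 / κ * (κ * a - D * n) ^ 2 := by positivity
  have hexpand : 1 / κ * (κ * a - D * n) ^ 2 =
      κ * a ^ 2 - 2 * a * (D * n) + 1 / κ * D ^ 2 * n ^ 2 := by
    field_simp
    ring
  have hD : 0 ≤ κ * n ^ 2 * (1 + D ^ 2 - D) :=
    mul_nonneg (by positivity) (by nlinarith [sq_nonneg (D - 1)])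
  have ha : 0 ≤ κ * a ^ 2 := by positivity
  linarith

/-- The asymmetric form of the difference estimate: the coefficient variation is charged to `u`. -/
lemma integral_weighted_le_of_le (hu : IsKdVProfile L u) (hv : IsKdVProfile L v) (hκ : 0 < κ)
    (hκL : κ * L ≤ 1) (hφv : φv ∈ Icc (0 : ℝ) 1)
    (hφ : |φv - φu| * L2norm L u ≤ K * L2norm L (v - u))
    (hB : ∀ x ∈ Icc 0 L, |u x| + |v x| ≤ B) :
    ∫ x in (0 : ℝ)..L, 2 * (1 + κ * x) * (v - u) x * -(kdvOp L φv v x - kdvOp L φu u x) ≤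
      -κ * L2norm L (∂[L,1] (v - u)) ^ 2 +
        (2 * κ + interactionConst κ K * B ^ 2) * L2norm L (v - u) ^ 2 := by
  have hL := hu.length_pos.le
  have hz := hv.sub hu
  have cu := hu.continuousOn
  have cv := hv.continuousOn
  have c₁ := hz.continuousOn_deriv 1
  have c₂ := hz.continuousOn_deriv 2
  have hint : ∀ {F : ℝ → ℝ}, ContinuousOn F (Icc 0 L) → IntervalIntegrable F volume 0 L :=
    fun hF => hF.intervalIntegrable_of_Icc hL
  have hB₀ : 0 ≤ B :=
    (add_nonneg (abs_nonneg _) (abs_nonneg _)).trans (hB 0 ⟨le_rfl, hL⟩)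
  have hsplit : ∫ x in (0 : ℝ)..L, 2 * (κ * (v - u) x + (1 + κ * x) * ∂[L,1] (v - u) x) *
        (kdvFlux L φv v x - kdvFlux L φu u x) =
      (∫ x in (0 : ℝ)..L, 2 * (κ * (v - u) x + (1 + κ * x) * ∂[L,1] (v - u) x) *
        (∂[L,2] (v - u) x + (v - u) x)) +
      ∫ x in (0 : ℝ)..L, (κ * (v - u) x + (1 + κ * x) * ∂[L,1] (v - u) x) *
        (φv * v x ^ 2 - φu * u x ^ 2) := by
    rw [← intervalIntegral.integral_add (hint (by fun_prop)) (hint (by fun_prop))]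
    refine integral_congr_Ioo hL fun x hx => ?_
    simp only [hv.deriv_sub hu 2 (Ioo_subset_Icc_self hx), kdvFlux, Pi.sub_apply]
    ring
  have hquad := le_of_abs_le <| abs_integral_mul_le_L2norm hL
    (f := fun x => κ * (v - u) x + (1 + κ * x) * ∂[L,1] (v - u) x)
    (g := fun x => φv * v x ^ 2 - φu * u x ^ 2) (by fun_prop) (by fun_prop)
  have hbound := mul_le_mul (hz.L2norm_deriv_weighted_le hκ.le hκL)
    (L2norm_sub_mul_sq_le hL cu cv hφv hφ hB hB₀) (L2norm_nonneg L _)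
    (add_nonneg (mul_nonneg hκ.le (L2norm_nonneg L _))
      (mul_nonneg zero_le_two (L2norm_nonneg L _)))
  have hyoung := young_weighted_le (a := L2norm L (∂[L,1] (v - u))) (n := L2norm L (v - u))
    (D := (K + 1) * B) hκ
  rw [integral_weighted_mul_sub_kdvOp hu hv, hsplit, hz.integral_weighted_linear_flux,
    interactionConst]
  linarith [sq_nonneg (∂[L,1] (v - u) 0)]

lemma integral_weighted_mul_sub_kdvOp_le (hu : IsKdVProfile L u) (hv : IsKdVProfile L v)
    (hκ : 0 < κ) (hκL : κ * L ≤ 1) (hφu : φu ∈ Icc (0 : ℝ) 1) (hφv : φv ∈ Icc (0 : ℝ) 1)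
    (hK : 0 ≤ K)
    (hφ : |φv - φu| * min (L2norm L u) (L2norm L v) ≤ K * |L2norm L v - L2norm L u|)
    (hB : ∀ x ∈ Icc 0 L, |u x| + |v x| ≤ B) :
    ∫ x in (0 : ℝ)..L, 2 * (1 + κ * x) * (v - u) x * -(kdvOp L φv v x - kdvOp L φu u x) ≤
      -κ * L2norm L (∂[L,1] (v - u)) ^ 2 +
        (2 * κ + interactionConst κ K * B ^ 2) * L2norm L (v - u) ^ 2 := by
  have hL := hu.length_pos.le
  have hφ' := hφ.trans (mul_le_mul_of_nonneg_left
    (abs_L2norm_sub_L2norm_le hL hv.continuousOn hu.continuousOn) hK)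
  rcases le_total (L2norm L u) (L2norm L v) with hle | hle
  · rw [min_eq_left hle] at hφ'
    exact integral_weighted_le_of_le hu hv hκ hκL hφv hφ' hB
  · rw [min_eq_right hle, abs_sub_comm, L2norm_sub_comm] at hφ'
    have hswap := integral_weighted_le_of_le hv hu hκ hκL hφu hφ'
      fun x hx => (add_comm _ _).trans_le (hB x hx)
    have hneg : L2norm L (∂[L,1] (v - u)) = L2norm L (∂[L,1] (u - v)) := by
      rw [L2norm_congr hL fun x hx => hv.deriv_sub hu 1 (Ioo_subset_Icc_self hx),
        L2norm_congr hL fun x hx => hu.deriv_sub hv 1 (Ioo_subset_Icc_self hx)]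
      exact L2norm_sub_comm L _ _
    rw [hneg, L2norm_sub_comm L v u]
    refine le_of_eq_of_le (intervalIntegral.integral_congr fun x _ => ?_) hswap
    simp only [Pi.sub_apply]
    ring

end IsKdVProfile

/-! ### KdV flows -/

/-- A classical flow of `u_t + u_x + u_xxx + φ(t) u u_x = 0` on `[0,T]` whose coefficient depends on
time through the `L²` norm of `u` only, with the scale-invariant Lipschitz constant `K`. The
function is continuous on the whole plane in order to allow time shifts without side conditions. -/
structure IsKdVFlow (L T K : ℝ) (φ : ℝ → ℝ) (u : ℝ → ℝ → ℝ) : Prop where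
  time_pos : 0 < T
  variation_nonneg : 0 ≤ K
  continuous : Continuous fun p : ℝ × ℝ => u p.1 p.2
  isKdVProfile : ∀ t ∈ Icc 0 T, IsKdVProfile L (u t)
  hasDerivAt : ∀ t ∈ Ioo 0 T, ∀ x ∈ Ioo 0 L,
    HasDerivAt (fun s => u s x) (-kdvOp L (φ t) (u t) x) t
  coeff_mem : ∀ t ∈ Icc 0 T, φ t ∈ Icc (0 : ℝ) 1
  coeff_variation : ∀ s ∈ Icc 0 T, ∀ t ∈ Icc 0 T,
    |φ t - φ s| * min (L2norm L (u s)) (L2norm L (u t)) ≤ K * |L2norm L (u t) - L2norm L (u s)|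

/-- The `L²` norm of the time derivative of a KdV flow. -/
noncomputable def kdvSpeed (L : ℝ) (φ : ℝ → ℝ) (u : ℝ → ℝ → ℝ) (t : ℝ) : ℝ :=
  L2norm L (kdvOp L (φ t) (u t))

lemma L2norm_neg_kdvOp (L : ℝ) (φ : ℝ → ℝ) (u : ℝ → ℝ → ℝ) (t : ℝ) :
    L2norm L (fun x => -kdvOp L (φ t) (u t) x) = kdvSpeed L φ u t := by
  simp [kdvSpeed, L2norm]

lemma integral_abs_le_L2norm {L : ℝ} {f : ℝ → ℝ} (hL : 0 ≤ L) (hf : ContinuousOn f (Icc 0 L)) :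
    ∫ x in (0 : ℝ)..L, |f x| ≤ √L * L2norm L f := by
  have h := abs_integral_mul_le_L2norm hL (f := fun _ => 1) continuousOn_const hf.abs
  have hone : L2norm L (fun _ => 1) = √L := by simp [L2norm]
  rw [hone, L2norm_abs] at h
  simpa using (le_abs_self _).trans h

section TimeDerivative

variable {L s t R : ℝ} {G G' : ℝ → ℝ → ℝ}

lemma integrable_deriv_of_L2norm_le (hL : 0 ≤ L)
    (hG : Continuous fun p : ℝ × ℝ => G p.1 p.2)
    (hGG' : ∀ τ ∈ Ioo s t, ∀ x ∈ Ioo 0 L, HasDerivAt (fun τ => G τ x) (G' τ x) τ)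
    (hG' : ∀ τ ∈ Ioo s t, ContinuousOn (G' τ) (Icc 0 L))
    (hR : ∀ τ ∈ Ioo s t, L2norm L (G' τ) ≤ R) :
    Integrable (fun p : ℝ × ℝ => deriv (fun σ => G σ p.2) p.1)
      ((volume.restrict (Ioo s t)).prod (volume.restrict (Ioo 0 L))) := by
  have hD : ∀ τ ∈ Ioo s t, EqOn (fun x => deriv (fun σ => G σ x) τ) (G' τ) (Ioo 0 L) :=
    fun τ hτ x hx => (hGG' τ hτ x hx).deriv
  have hmeas : Measurable fun p : ℝ × ℝ => deriv (fun σ => G σ p.2) p.1 :=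
    (measurable_deriv_with_param (f := fun x τ => G τ x) (hG.comp continuous_swap)).comp
      measurable_swap
  refine (integrable_prod_iff hmeas.aestronglyMeasurable).2 ⟨?_, ?_⟩
  · filter_upwards [ae_restrict_mem measurableSet_Ioo] with τ hτ
    exact ((hG' τ hτ).integrableOn_Icc.mono_set Ioo_subset_Icc_self).congr_fun (hD τ hτ).symm
      measurableSet_Ioo
  · refine Measure.integrableOn_of_bounded (M := √L * R) (by simp)
      hmeas.norm.stronglyMeasurable.integral_prod_right.aestronglyMeasurable ?_
    filter_upwards [ae_restrict_mem measurableSet_Ioo] with τ hτ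
    rw [Real.norm_of_nonneg (integral_nonneg fun _ => norm_nonneg _),
      setIntegral_congr_fun measurableSet_Ioo fun x hx => congrArg norm (hD τ hτ hx),
      ← integral_Ioc_eq_integral_Ioo, ← intervalIntegral.integral_of_le hL]
    exact (integral_abs_le_L2norm hL (hG' τ hτ)).trans
      (mul_le_mul_of_nonneg_left (hR τ hτ) (Real.sqrt_nonneg L))

lemma integral_sub_integral_le_of_hasDerivAt (hL : 0 ≤ L) (hst : s ≤ t)
    (hG : Continuous fun p : ℝ × ℝ => G p.1 p.2)
    (hGG' : ∀ τ ∈ Ioo s t, ∀ x ∈ Ioo 0 L, HasDerivAt (fun τ => G τ x) (G' τ x) τ)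
    (hG' : ∀ τ ∈ Ioo s t, ContinuousOn (G' τ) (Icc 0 L))
    (hR : ∀ τ ∈ Ioo s t, L2norm L (G' τ) ≤ R) {β : ℝ → ℝ}
    (hβ : IntervalIntegrable β volume s t)
    (hle : ∀ τ ∈ Ioo s t, ∫ x in (0 : ℝ)..L, G' τ x ≤ β τ) :
    (∫ x in (0 : ℝ)..L, G t x) - (∫ x in (0 : ℝ)..L, G s x) ≤ ∫ τ in s..t, β τ := by
  have hspace : ∀ f : ℝ → ℝ, ∫ x in (0 : ℝ)..L, f x = ∫ x in Ioo 0 L, f x := fun f => by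
    rw [intervalIntegral.integral_of_le hL, integral_Ioc_eq_integral_Ioo]
  have htime : ∀ f : ℝ → ℝ, ∫ τ in s..t, f τ = ∫ τ in Ioo s t, f τ := fun f => by
    rw [intervalIntegral.integral_of_le hst, integral_Ioc_eq_integral_Ioo]
  have hslice : ∀ τ, IntervalIntegrable (G τ) volume 0 L := fun τ =>
    (hG.comp (Continuous.prodMk_right τ)).intervalIntegrable 0 L
  have hint := integrable_deriv_of_L2norm_le hL hG hGG' hG' hR
  have hftc : ∀ᵐ x ∂volume.restrict (Ioo 0 L),
      G t x - G s x = ∫ τ in Ioo s t, deriv (fun σ => G σ x) τ := by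
    filter_upwards [ae_restrict_mem measurableSet_Ioo, hint.prod_left_ae] with x hx hx_int
    rw [← htime]
    exact (intervalIntegral.integral_eq_sub_of_hasDerivAt_of_le hst
      (hG.comp (Continuous.prodMk_left x)).continuousOn
      (fun τ hτ => (hGG' τ hτ x hx).differentiableAt.hasDerivAt)
      ((intervalIntegrable_iff_integrableOn_Ioo_of_le hst).2 hx_int)).symm
  calc (∫ x in (0 : ℝ)..L, G t x) - ∫ x in (0 : ℝ)..L, G s x
      = ∫ x in Ioo 0 L, ∫ τ in Ioo s t, deriv (fun σ => G σ x) τ := by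
        rw [← intervalIntegral.integral_sub (hslice t) (hslice s), hspace, integral_congr_ae hftc]
    _ = ∫ τ in Ioo s t, ∫ x in Ioo 0 L, deriv (fun σ => G σ x) τ :=
        (integral_integral_swap hint).symm
    _ ≤ ∫ τ in Ioo s t, β τ := by
        refine setIntegral_mono_on hint.integral_prod_left
          ((intervalIntegrable_iff_integrableOn_Ioo_of_le hst).1 hβ) measurableSet_Ioo
          fun τ hτ => ?_
        rw [setIntegral_congr_fun measurableSet_Ioo fun x hx => (hGG' τ hτ x hx).deriv, ← hspace]
        exact hle τ hτ
    _ = ∫ τ in s..t, β τ := (htime β).symm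

end TimeDerivative

namespace IsKdVFlow

variable {L T K : ℝ} {φ : ℝ → ℝ} {u : ℝ → ℝ → ℝ}

lemma length_pos (h : IsKdVFlow L T K φ u) : 0 < L :=
  (h.isKdVProfile 0 ⟨le_rfl, h.time_pos.le⟩).length_pos

lemma continuous_slice (h : IsKdVFlow L T K φ u) (t : ℝ) : Continuous (u t) :=
  h.continuous.comp (Continuous.prodMk_right t)

lemma continuousOn_slice (h : IsKdVFlow L T K φ u) (t : ℝ) : ContinuousOn (u t) (Icc 0 L) :=
  (h.continuous_slice t).continuousOn

lemma continuousOn_kdvOp (h : IsKdVFlow L T K φ u) {t : ℝ} (ht : t ∈ Icc 0 T) :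
    ContinuousOn (kdvOp L (φ t) (u t)) (Icc 0 L) :=
  (h.isKdVProfile t ht).continuousOn_kdvOp (φ t)

lemma kdvSpeed_le_of_eventually_le (h : IsKdVFlow L T K φ u) {t m : ℝ} (ht : t ∈ Ioo 0 T)
    (hm : ∀ᶠ r in 𝓝[>] 0, L2norm L (u (t + r) - u t) ≤ m * r) : kdvSpeed L φ u t ≤ m := by
  rw [← L2norm_neg_kdvOp]
  exact L2norm_deriv_le_of_eventually_le h.length_pos.le h.continuousOn_slice
    (h.continuousOn_kdvOp (Ioo_subset_Icc_self ht)).fun_neg (h.hasDerivAt t ht) hm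

lemma L2norm_mul_neg_kdvOp_le (h : IsKdVFlow L T K φ u) {t M R : ℝ} (ht : t ∈ Icc 0 T)
    {w : ℝ → ℝ} (hw : ContinuousOn w (Icc 0 L)) (hM : ∀ x ∈ Icc 0 L, |w x| ≤ M)
    (hR : kdvSpeed L φ u t ≤ R) :
    L2norm L (w * fun x => -kdvOp L (φ t) (u t) x) ≤ M * R := by
  refine (L2norm_mul_le h.length_pos.le hw (h.continuousOn_kdvOp ht).fun_neg hM).trans ?_
  rw [L2norm_neg_kdvOp]
  exact mul_le_mul_of_nonneg_left hR
    ((abs_nonneg _).trans (hM 0 (left_mem_Icc.2 h.length_pos.le)))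

/-- The time derivative may involve the flow at the times `τ` and `τ + r`, with multipliers `P`
and `Q`. -/
lemma integral_sub_integral_le_of_shift (h : IsKdVFlow L T K φ u) {s t r R : ℝ}
    (hs : 0 ≤ s) (hst : s ≤ t) (hr : 0 ≤ r) (ht : t + r ≤ T) {G P Q : ℝ → ℝ → ℝ}
    (hG : Continuous fun p : ℝ × ℝ => G p.1 p.2) (hP : Continuous fun p : ℝ × ℝ => P p.1 p.2)
    (hQ : Continuous fun p : ℝ × ℝ => Q p.1 p.2)
    (hderiv : ∀ τ ∈ Ioo s t, ∀ x ∈ Ioo 0 L, HasDerivAt (fun τ => G τ x)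
      (P τ x * -kdvOp L (φ τ) (u τ) x + Q τ x * -kdvOp L (φ (τ + r)) (u (τ + r)) x) τ)
    (hR : ∀ τ ∈ Ioo s (t + r), kdvSpeed L φ u τ ≤ R) {β : ℝ → ℝ}
    (hβ : IntervalIntegrable β volume s t)
    (hle : ∀ τ ∈ Ioo s t, ∫ x in (0 : ℝ)..L, (P τ x * -kdvOp L (φ τ) (u τ) x +
      Q τ x * -kdvOp L (φ (τ + r)) (u (τ + r)) x) ≤ β τ) :
    (∫ x in (0 : ℝ)..L, G t x) - (∫ x in (0 : ℝ)..L, G s x) ≤ ∫ τ in s..t, β τ := by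
  have hL := h.length_pos.le
  obtain ⟨M, hM⟩ := (isCompact_Icc.prod isCompact_Icc).exists_bound_of_continuousOn
    (s := Icc s t ×ˢ Icc 0 L) (hP.norm.add hQ.norm).continuousOn
  have hPQ : ∀ τ ∈ Ioo s t, ∀ x ∈ Icc 0 L, |P τ x| + |Q τ x| ≤ M := fun τ hτ x hx =>
    (le_abs_self _).trans (hM (τ, x) ⟨Ioo_subset_Icc_self hτ, hx⟩)
  have hslice : ∀ {w : ℝ → ℝ → ℝ}, (Continuous fun p : ℝ × ℝ => w p.1 p.2) →
      ∀ τ, ContinuousOn (w τ) (Icc 0 L) := fun hw τ =>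
    (hw.comp (Continuous.prodMk_right τ)).continuousOn
  have hnow : ∀ τ ∈ Ioo s t, τ ∈ Ioo s (t + r) := fun τ hτ => ⟨hτ.1, by linarith [hτ.2]⟩
  have hlater : ∀ τ ∈ Ioo s t, τ + r ∈ Ioo s (t + r) := fun τ hτ =>
    ⟨by linarith [hτ.1], by linarith [hτ.2]⟩
  have hmem : ∀ τ ∈ Ioo s (t + r), τ ∈ Icc 0 T := fun τ hτ =>
    ⟨by linarith [hτ.1], by linarith [hτ.2]⟩
  have cP : ∀ τ ∈ Ioo s t, ContinuousOn (P τ * fun x => -kdvOp L (φ τ) (u τ) x) (Icc 0 L) :=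
    fun τ hτ => (hslice hP τ).mul (h.continuousOn_kdvOp (hmem τ (hnow τ hτ))).fun_neg
  have cQ : ∀ τ ∈ Ioo s t,
      ContinuousOn (Q τ * fun x => -kdvOp L (φ (τ + r)) (u (τ + r)) x) (Icc 0 L) :=
    fun τ hτ => (hslice hQ τ).mul (h.continuousOn_kdvOp (hmem _ (hlater τ hτ))).fun_neg
  refine integral_sub_integral_le_of_hasDerivAt hL hst hG hderiv (R := M * R + M * R)
    (fun τ hτ => (cP τ hτ).add (cQ τ hτ)) (fun τ hτ => ?_) hβ hle
  exact (L2norm_add_le hL (cP τ hτ) (cQ τ hτ)).trans <| add_le_add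
    (h.L2norm_mul_neg_kdvOp_le (hmem τ (hnow τ hτ)) (hslice hP τ)
      (fun x hx => by linarith [hPQ τ hτ x hx, abs_nonneg (Q τ x)]) (hR τ (hnow τ hτ)))
    (h.L2norm_mul_neg_kdvOp_le (hmem _ (hlater τ hτ)) (hslice hQ τ)
      (fun x hx => by linarith [hPQ τ hτ x hx, abs_nonneg (P τ x)]) (hR _ (hlater τ hτ)))

lemma integral_sub_integral_le (h : IsKdVFlow L T K φ u) {s t R : ℝ} (hs : 0 ≤ s) (hst : s ≤ t)
    (ht : t ≤ T) {G P : ℝ → ℝ → ℝ} (hG : Continuous fun p : ℝ × ℝ => G p.1 p.2)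
    (hP : Continuous fun p : ℝ × ℝ => P p.1 p.2)
    (hderiv : ∀ τ ∈ Ioo s t, ∀ x ∈ Ioo 0 L,
      HasDerivAt (fun τ => G τ x) (P τ x * -kdvOp L (φ τ) (u τ) x) τ)
    (hR : ∀ τ ∈ Ioo s t, kdvSpeed L φ u τ ≤ R) {β : ℝ → ℝ}
    (hβ : IntervalIntegrable β volume s t)
    (hle : ∀ τ ∈ Ioo s t, ∫ x in (0 : ℝ)..L, P τ x * -kdvOp L (φ τ) (u τ) x ≤ β τ) :
    (∫ x in (0 : ℝ)..L, G t x) - (∫ x in (0 : ℝ)..L, G s x) ≤ ∫ τ in s..t, β τ :=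
  h.integral_sub_integral_le_of_shift (r := 0) (Q := fun _ _ => 0) hs hst le_rfl (by simpa) hG hP
    continuous_const (by simpa using hderiv) (by simpa using hR) hβ (by simpa using hle)

lemma L2norm_sub_sq_le (h : IsKdVFlow L T K φ u) {s t R B : ℝ} (hs : 0 ≤ s) (hst : s ≤ t)
    (ht : t ≤ T) (hR : ∀ τ ∈ Ioo s t, kdvSpeed L φ u τ ≤ R)
    (hB : ∀ τ ∈ Ioo s t, ∫ x in (0 : ℝ)..L, (u t - u s) x * -kdvOp L (φ τ) (u τ) x ≤ B) :
    L2norm L (u t - u s) ^ 2 ≤ (t - s) * B := by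
  have hut := h.continuous_slice t
  have hus := h.continuous_slice s
  have hu := h.continuous
  have hstep := h.integral_sub_integral_le hs hst ht (G := fun τ x => (u t - u s) x * u τ x)
    (P := fun _ => u t - u s) (by fun_prop) (by fun_prop)
    (fun τ hτ x hx =>
      (h.hasDerivAt τ ⟨by linarith [hτ.1], by linarith [hτ.2]⟩ x hx).const_mul _) hR
    (β := fun _ => B) intervalIntegrable_const hB
  rw [intervalIntegral.integral_const, smul_eq_mul, ← intervalIntegral.integral_sub
    (Continuous.intervalIntegrable (by fun_prop) 0 L)
    (Continuous.intervalIntegrable (by fun_prop) 0 L)] at hstep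
  rw [sq_L2norm h.length_pos.le]
  refine le_of_eq_of_le (intervalIntegral.integral_congr fun x _ => ?_) hstep
  simp only [Pi.sub_apply]
  ring

end IsKdVFlow

/-! ### Growth of the differences of a flow -/

section weightedEnergy

variable {L κ : ℝ}

lemma weightedEnergy_zero (L κ : ℝ) : weightedEnergy L κ 0 = 0 := by simp [weightedEnergy]

lemma continuous_weightedEnergy (L κ : ℝ) {z : ℝ → ℝ → ℝ}
    (hz : Continuous fun p : ℝ × ℝ => z p.1 p.2) :
    Continuous fun τ => weightedEnergy L κ (z τ) :=
  intervalIntegral.continuous_parametric_intervalIntegral_of_continuous' (by fun_prop) 0 L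

end weightedEnergy

/-- The number `g` bounds the exponential growth rate of the weighted energy of `v - u`, where `u`
and `v` solve KdV equations whose coefficients have the variation constant `K`. -/
def IsGrowthBound (L κ K : ℝ) (u v : ℝ → ℝ) (g : ℝ) : Prop :=
  ∃ B, (∀ x ∈ Icc 0 L, |u x| + |v x| ≤ B) ∧ 2 * κ + interactionConst κ K * B ^ 2 ≤ g

lemma IsGrowthBound.nonneg {L κ K g : ℝ} {u v : ℝ → ℝ} (hκ : 0 ≤ κ)
    (h : IsGrowthBound L κ K u v g) : 0 ≤ g := by
  obtain ⟨B, -, hB⟩ := h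
  linarith [mul_nonneg (interactionConst_nonneg hκ K) (sq_nonneg B)]

lemma add_mul_sub_le_two_mul_of_forall_bound {E : ℝ → ℝ} {s t c : ℝ} (hst : s ≤ t) (hc : 0 ≤ c)
    (hE : ContinuousOn E (Icc s t))
    (h : ∀ M, (∀ τ ∈ Icc s t, E τ ≤ M) → ∀ σ ∈ Icc s t, E σ + c * (σ - s) ≤ E s + M / 2) :
    E t + c * (t - s) ≤ 2 * E s := by
  obtain ⟨σ, hσ, hmax⟩ := isCompact_Icc.exists_isMaxOn (nonempty_Icc.2 hst) hE
  have hpeak := h (E σ) hmax σ hσ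
  have hend := h (E σ) hmax t (right_mem_Icc.2 hst)
  linarith [mul_nonneg hc (sub_nonneg.2 hσ.1)]

lemma le_sq_of_forall_bound {W : ℝ → ℝ} {a t C R : ℝ} (hat : a < t) (hW : Continuous W)
    (hWa : W a = 0) (hW₀ : ∀ τ, 0 ≤ W τ) (hC : 0 ≤ C) (hR : 0 ≤ R) (hCt : C * (t - a) ≤ 1 / 2)
    (h : ∀ m, 0 ≤ m → (∀ τ ∈ Icc a t, W τ ≤ m ^ 2) → ∀ s ∈ Ioo a t, ∀ σ ∈ Icc s t,
      W σ - W s ≤ (σ - s) * (C * m ^ 2 + 4 * R * m)) :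
    W t ≤ (8 * R * (t - a)) ^ 2 := by
  obtain ⟨σ, hσ, hmax⟩ := isCompact_Icc.exists_isMaxOn (nonempty_Icc.2 hat.le) hW.continuousOn
  have hmax' : ∀ τ ∈ Icc a t, W τ ≤ W σ := fun τ hτ => hmax hτ
  refine (hmax' t (right_mem_Icc.2 hat.le)).trans ?_
  rcases hσ.1.eq_or_lt with rfl | haσ
  · rw [hWa]
    positivity
  set m := √(W σ)
  have hm_sq : m ^ 2 = W σ := Real.sq_sqrt (hW₀ σ)
  have hm₀ : 0 ≤ m := Real.sqrt_nonneg _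
  have hlim : W σ - W a ≤ (σ - a) * (C * m ^ 2 + 4 * R * m) := by
    refine le_of_tendsto_of_tendsto (b := 𝓝[>] a) (f := fun s => W σ - W s)
      (g := fun s => (σ - s) * (C * m ^ 2 + 4 * R * m))
      ((Continuous.tendsto (by fun_prop) a).mono_left nhdsWithin_le_nhds)
      ((Continuous.tendsto (by fun_prop) a).mono_left nhdsWithin_le_nhds) ?_
    filter_upwards [Ioo_mem_nhdsGT haσ] with s hs
    exact h m hm₀ (fun τ hτ => (hmax' τ hτ).trans_eq hm_sq.symm) s ⟨hs.1, hs.2.trans_le hσ.2⟩ σ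
      ⟨hs.2.le, hσ.2⟩
  have hquad : m * m ≤ m * (8 * R * (t - a)) := by
    have hσt : (σ - a) * (C * m ^ 2 + 4 * R * m) ≤ (t - a) * (C * m ^ 2 + 4 * R * m) :=
      mul_le_mul_of_nonneg_right (by linarith [hσ.2]) (by positivity)
    linarith [mul_le_mul_of_nonneg_right hCt (sq_nonneg m)]
  rw [← hm_sq]
  rcases hm₀.eq_or_lt with hzero | hpos
  · rw [← hzero, zero_pow two_ne_zero]
    positivity
  · exact pow_le_pow_left₀ hm₀ (le_of_mul_le_mul_left hquad hpos) 2

namespace IsKdVFlow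

variable {L T K κ : ℝ} {φ : ℝ → ℝ} {u : ℝ → ℝ → ℝ}

lemma continuous_shift_sub (h : IsKdVFlow L T K φ u) (r : ℝ) :
    Continuous fun p : ℝ × ℝ => (u (p.1 + r) - u p.1) p.2 :=
  (h.continuous.comp ((continuous_fst.add continuous_const).prodMk continuous_snd)).sub
    h.continuous

lemma continuousOn_sub (h : IsKdVFlow L T K φ u) (s t : ℝ) :
    ContinuousOn (u t - u s) (Icc 0 L) :=
  (h.continuousOn_slice t).sub (h.continuousOn_slice s)

lemma integral_weighted_le (h : IsKdVFlow L T K φ u) (hκ : 0 < κ) (hκL : κ * L ≤ 1) {s t g : ℝ}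
    (hs : s ∈ Icc 0 T) (ht : t ∈ Icc 0 T) (hg : IsGrowthBound L κ K (u s) (u t) g) :
    ∫ x in (0 : ℝ)..L, 2 * (1 + κ * x) * (u t - u s) x *
        -(kdvOp L (φ t) (u t) x - kdvOp L (φ s) (u s) x) ≤
      -κ * L2norm L (∂[L,1] (u t - u s)) ^ 2 + g * L2norm L (u t - u s) ^ 2 := by
  obtain ⟨B, hB, hBg⟩ := hg
  refine (IsKdVProfile.integral_weighted_mul_sub_kdvOp_le (h.isKdVProfile s hs)
    (h.isKdVProfile t ht) hκ hκL (h.coeff_mem s hs) (h.coeff_mem t ht) h.variation_nonneg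
    (h.coeff_variation s hs t ht) hB).trans ?_
  gcongr

lemma hasDerivAt_weighted_shift_sub_sq (h : IsKdVFlow L T K φ u) {τ r x : ℝ} (hτ : τ ∈ Ioo 0 T)
    (hτr : τ + r ∈ Ioo 0 T) (hx : x ∈ Ioo 0 L) :
    HasDerivAt (fun τ => (1 + κ * x) * (u (τ + r) - u τ) x ^ 2)
      (-(2 * (1 + κ * x) * (u (τ + r) - u τ) x) * -kdvOp L (φ τ) (u τ) x +
        2 * (1 + κ * x) * (u (τ + r) - u τ) x * -kdvOp L (φ (τ + r)) (u (τ + r)) x) τ := by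
  have hlater := (h.hasDerivAt (τ + r) hτr x hx).comp_add_const τ r
  refine (((hlater.fun_sub (h.hasDerivAt τ hτ x hx)).fun_pow 2).const_mul (1 + κ * x)).congr_deriv
    ?_
  simp only [Pi.sub_apply, Nat.cast_ofNat]
  ring

lemma weightedEnergy_shift_sub_sub_le (h : IsKdVFlow L T K φ u) (hκ : 0 < κ) (hκL : κ * L ≤ 1)
    {s t r R c M : ℝ} {γ : ℝ → ℝ} (hs : 0 ≤ s) (hst : s ≤ t) (hr : 0 ≤ r) (ht : t + r ≤ T)
    (hR : ∀ τ ∈ Ioo s (t + r), kdvSpeed L φ u τ ≤ R) (hγ : IntervalIntegrable γ volume s t)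
    (hγ_bound : ∀ τ ∈ Ioo s t, IsGrowthBound L κ K (u τ) (u (τ + r)) (γ τ))
    (hc : ∀ τ ∈ Ioo s t, c ≤ L2norm L (∂[L,1] (u (τ + r) - u τ)) ^ 2)
    (hM : ∀ τ ∈ Ioo s t, weightedEnergy L κ (u (τ + r) - u τ) ≤ M) :
    weightedEnergy L κ (u (t + r) - u t) - weightedEnergy L κ (u (s + r) - u s) ≤
      (∫ τ in s..t, γ τ) * M - κ * c * (t - s) := by
  have hz := h.continuous_shift_sub r
  have hmem : ∀ τ ∈ Ioo s t, τ ∈ Ioo 0 T ∧ τ + r ∈ Ioo 0 T := fun τ hτ =>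
    ⟨⟨by linarith [hτ.1], by linarith [hτ.2]⟩, ⟨by linarith [hτ.1], by linarith [hτ.2]⟩⟩
  have hβ := (hγ.mul_const M).sub (g := fun _ => κ * c) intervalIntegrable_const
  have hbound := h.integral_sub_integral_le_of_shift hs hst hr ht
    (G := fun τ x => (1 + κ * x) * (u (τ + r) - u τ) x ^ 2)
    (P := fun τ x => -(2 * (1 + κ * x) * (u (τ + r) - u τ) x))
    (Q := fun τ x => 2 * (1 + κ * x) * (u (τ + r) - u τ) x)
    (by fun_prop) (by fun_prop) (by fun_prop)
    (fun τ hτ x hx => h.hasDerivAt_weighted_shift_sub_sq (hmem τ hτ).1 (hmem τ hτ).2 hx) hR hβ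
    fun τ hτ => ?_
  · refine hbound.trans_eq ?_
    rw [intervalIntegral.integral_sub (hγ.mul_const M) intervalIntegrable_const,
      intervalIntegral.integral_mul_const, intervalIntegral.integral_const, smul_eq_mul]
    ring
  · have hcross := h.integral_weighted_le hκ hκL (Ioo_subset_Icc_self (hmem τ hτ).1)
      (Ioo_subset_Icc_self (hmem τ hτ).2) (hγ_bound τ hτ)
    have hgrowth := mul_le_mul_of_nonneg_left ((sq_L2norm_le_weightedEnergy h.length_pos.le hκ.le
      (h.continuousOn_sub τ (τ + r))).trans (hM τ hτ)) ((hγ_bound τ hτ).nonneg hκ.le)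
    refine le_trans (le_of_eq_of_le (intervalIntegral.integral_congr fun x _ => ?_) hcross)
      (by linarith [mul_le_mul_of_nonneg_left (hc τ hτ) hκ.le])
    ring

lemma weightedEnergy_shift_sub_add_le_two_mul (h : IsKdVFlow L T K φ u) (hκ : 0 < κ)
    (hκL : κ * L ≤ 1) {s t r R c : ℝ} {γ : ℝ → ℝ} (hs : 0 ≤ s) (hst : s ≤ t) (hr : 0 ≤ r)
    (ht : t + r ≤ T) (hR : ∀ τ ∈ Ioo s (t + r), kdvSpeed L φ u τ ≤ R)
    (hγ : IntervalIntegrable γ volume s t)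
    (hγ_bound : ∀ τ ∈ Ioo s t, IsGrowthBound L κ K (u τ) (u (τ + r)) (γ τ))
    (hγ_half : ∫ τ in s..t, γ τ ≤ 1 / 2) (hc₀ : 0 ≤ c)
    (hc : ∀ τ ∈ Ioo s t, c ≤ L2norm L (∂[L,1] (u (τ + r) - u τ)) ^ 2) :
    weightedEnergy L κ (u (t + r) - u t) + κ * c * (t - s) ≤
      2 * weightedEnergy L κ (u (s + r) - u s) := by
  refine add_mul_sub_le_two_mul_of_forall_bound
    (E := fun τ => weightedEnergy L κ (u (τ + r) - u τ)) hst (mul_nonneg hκ.le hc₀)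
    (continuous_weightedEnergy L κ (z := fun τ => u (τ + r) - u τ)
      (h.continuous_shift_sub r)).continuousOn fun M hM σ hσ => ?_
  have hM₀ : 0 ≤ M := ((sq_nonneg _).trans (sq_L2norm_le_weightedEnergy h.length_pos.le hκ.le
    (h.continuousOn_sub σ (σ + r)))).trans (hM σ hσ)
  have hsub : Ioo s σ ⊆ Ioo s t := Ioo_subset_Ioo_right hσ.2
  have hγ_left : IntervalIntegrable γ volume s σ := hγ.mono_set <| by
    rw [uIcc_of_le hσ.1, uIcc_of_le hst]
    exact Icc_subset_Icc_right hσ.2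
  have hγ_le : ∫ τ in s..σ, γ τ ≤ ∫ τ in s..t, γ τ := by
    refine intervalIntegral.integral_mono_interval le_rfl hσ.1 hσ.2 ?_ hγ
    rw [Measure.restrict_congr_set Ioo_ae_eq_Ioc.symm]
    filter_upwards [ae_restrict_mem measurableSet_Ioo] with τ hτ
    exact (hγ_bound τ hτ).nonneg hκ.le
  have hstep := h.weightedEnergy_shift_sub_sub_le hκ hκL hs hσ.1 hr (by linarith [hσ.2])
    (fun τ hτ => hR τ ⟨hτ.1, by linarith [hτ.2, hσ.2]⟩) hγ_left
    (fun τ hτ => hγ_bound τ (hsub hτ)) (fun τ hτ => hc τ (hsub hτ))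
    fun τ hτ => hM τ (Ioo_subset_Icc_self (hsub hτ))
  linarith [mul_le_mul_of_nonneg_right (hγ_le.trans hγ_half) hM₀]

end IsKdVFlow

/-! ### Forward propagation of regularity -/

namespace IsKdVFlow

variable {L T K κ C : ℝ} {φ : ℝ → ℝ} {u : ℝ → ℝ → ℝ}

lemma exists_abs_le (h : IsKdVFlow L T K φ u) :
    ∃ M, ∀ t ∈ Icc 0 T, ∀ x ∈ Icc 0 L, |u t x| ≤ M := by
  obtain ⟨M, hM⟩ := (isCompact_Icc.prod isCompact_Icc).exists_bound_of_continuousOn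
    (s := Icc 0 T ×ˢ Icc 0 L) h.continuous.continuousOn
  exact ⟨M, fun t ht x hx => hM (t, x) ⟨ht, hx⟩⟩

lemma exists_isGrowthBound (h : IsKdVFlow L T K φ u) (κ : ℝ) :
    ∃ C, ∀ s ∈ Icc 0 T, ∀ t ∈ Icc 0 T, IsGrowthBound L κ K (u s) (u t) C := by
  obtain ⟨M, hM⟩ := h.exists_abs_le
  exact ⟨_, fun s hs t ht => ⟨M + M, fun x hx => add_le_add (hM s hs x hx) (hM t ht x hx), le_rfl⟩⟩

lemma integral_weighted_sub_initial_le (h : IsKdVFlow L T K φ u) (hκ : 0 < κ) (hκL : κ * L ≤ 1)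
    {a τ R m : ℝ} (ha : a ∈ Icc 0 T) (hτ : τ ∈ Icc 0 T)
    (hC : IsGrowthBound L κ K (u a) (u τ) C) (hR : kdvSpeed L φ u a ≤ R) (hm₀ : 0 ≤ m)
    (hm : L2norm L (u τ - u a) ≤ m) :
    ∫ x in (0 : ℝ)..L, 2 * (1 + κ * x) * (u τ - u a) x * -kdvOp L (φ τ) (u τ) x ≤
      C * m ^ 2 + 4 * R * m := by
  have hL := h.length_pos.le
  have cz := h.continuousOn_sub a τ
  have ca := h.continuousOn_kdvOp ha
  have cτ := h.continuousOn_kdvOp hτ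
  have hsplit : ∫ x in (0 : ℝ)..L, 2 * (1 + κ * x) * (u τ - u a) x * -kdvOp L (φ τ) (u τ) x =
      (∫ x in (0 : ℝ)..L, 2 * (1 + κ * x) * (u τ - u a) x *
        -(kdvOp L (φ τ) (u τ) x - kdvOp L (φ a) (u a) x)) +
      -2 * ∫ x in (0 : ℝ)..L, (1 + κ * x) * (u τ - u a) x * kdvOp L (φ a) (u a) x := by
    rw [← intervalIntegral.integral_const_mul, ← intervalIntegral.integral_add
      (ContinuousOn.intervalIntegrable_of_Icc hL (by fun_prop))
      (ContinuousOn.intervalIntegrable_of_Icc hL (by fun_prop))]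
    exact intervalIntegral.integral_congr fun x _ => by ring
  have hweight : L2norm L ((fun x => 1 + κ * x) * (u τ - u a)) ≤ 2 * m :=
    (L2norm_mul_le hL (by fun_prop) cz fun x hx => abs_one_add_mul_le_two hκ.le hκL hx).trans
      (mul_le_mul_of_nonneg_left hm zero_le_two)
  have hforce := neg_le_of_abs_le <| (abs_integral_mul_le_L2norm hL
    (f := (fun x => 1 + κ * x) * (u τ - u a)) (by fun_prop) ca).trans
    (mul_le_mul hweight hR (L2norm_nonneg L _) (by positivity))
  have hgrowth := mul_le_mul_of_nonneg_left (pow_le_pow_left₀ (L2norm_nonneg L _) hm 2)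
    (hC.nonneg hκ.le)
  have hdiff := h.integral_weighted_le hκ hκL ha hτ hC
  simp only [Pi.mul_apply] at hforce
  rw [hsplit]
  linarith [mul_nonneg hκ.le (sq_nonneg (L2norm L (∂[L,1] (u τ - u a))))]

lemma hasDerivAt_weighted_sub_sq (h : IsKdVFlow L T K φ u) (κ : ℝ) (w : ℝ → ℝ) {τ x : ℝ}
    (hτ : τ ∈ Ioo 0 T) (hx : x ∈ Ioo 0 L) :
    HasDerivAt (fun τ => (1 + κ * x) * (u τ - w) x ^ 2)
      (2 * (1 + κ * x) * (u τ - w) x * -kdvOp L (φ τ) (u τ) x) τ := by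
  refine ((((h.hasDerivAt τ hτ x hx).sub_const (w x)).fun_pow 2).const_mul
    (1 + κ * x)).congr_deriv ?_
  simp only [Pi.sub_apply, Nat.cast_ofNat]
  ring

lemma weightedEnergy_sub_sub_le (h : IsKdVFlow L T K φ u) (κ : ℝ) {w : ℝ → ℝ}
    (hw : Continuous w) {s t R : ℝ} (hs : 0 ≤ s) (hst : s ≤ t) (ht : t ≤ T)
    (hR : ∀ τ ∈ Ioo s t, kdvSpeed L φ u τ ≤ R) {β : ℝ → ℝ}
    (hβ : IntervalIntegrable β volume s t)
    (hle : ∀ τ ∈ Ioo s t,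
      ∫ x in (0 : ℝ)..L, 2 * (1 + κ * x) * (u τ - w) x * -kdvOp L (φ τ) (u τ) x ≤ β τ) :
    weightedEnergy L κ (u t - w) - weightedEnergy L κ (u s - w) ≤ ∫ τ in s..t, β τ := by
  have hz : Continuous fun p : ℝ × ℝ => (u p.1 - w) p.2 :=
    h.continuous.sub (hw.comp continuous_snd)
  exact h.integral_sub_integral_le hs hst ht (G := fun τ x => (1 + κ * x) * (u τ - w) x ^ 2)
    (P := fun τ x => 2 * (1 + κ * x) * (u τ - w) x) (by fun_prop) (by fun_prop)
    (fun τ hτ x hx => h.hasDerivAt_weighted_sub_sq κ w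
      ⟨by linarith [hτ.1], by linarith [hτ.2]⟩ hx) hR hβ hle

lemma weightedEnergy_sub_initial_le (h : IsKdVFlow L T K φ u) (hκ : 0 < κ) (hκL : κ * L ≤ 1)
    (hC : ∀ s ∈ Icc 0 T, ∀ t ∈ Icc 0 T, IsGrowthBound L κ K (u s) (u t) C) {a t R : ℝ}
    (ha : 0 ≤ a) (hat : a < t) (ht : t ≤ T) (hCt : C * (t - a) ≤ 1 / 2)
    (hR : kdvSpeed L φ u a ≤ R)
    (hbdd : ∀ s ∈ Ioo a t, ∃ S, ∀ τ ∈ Ioo s t, kdvSpeed L φ u τ ≤ S) :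
    weightedEnergy L κ (u t - u a) ≤ (8 * R * (t - a)) ^ 2 := by
  have hL := h.length_pos.le
  have ha' : a ∈ Icc 0 T := ⟨ha, by linarith⟩
  have hz : Continuous fun p : ℝ × ℝ => (u p.1 - u a) p.2 :=
    h.continuous.sub ((h.continuous_slice a).comp continuous_snd)
  have hlower : ∀ τ, L2norm L (u τ - u a) ^ 2 ≤ weightedEnergy L κ (u τ - u a) := fun τ =>
    sq_L2norm_le_weightedEnergy hL hκ.le (h.continuousOn_sub a τ)
  refine le_sq_of_forall_bound hat
    (continuous_weightedEnergy L κ (z := fun τ => u τ - u a) hz)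
    (by rw [sub_self, weightedEnergy_zero]) (fun τ => (sq_nonneg _).trans (hlower τ))
    ((hC a ha' a ha').nonneg hκ.le) ((L2norm_nonneg L _).trans hR) hCt
    fun m hm₀ hm s hs σ hσ => ?_
  obtain ⟨S, hS⟩ := hbdd s hs
  have hstep := h.weightedEnergy_sub_sub_le κ (h.continuous_slice a) (by linarith [hs.1]) hσ.1
    (by linarith [hσ.2]) (fun τ hτ => hS τ ⟨hτ.1, by linarith [hτ.2, hσ.2]⟩)
    (β := fun _ => C * m ^ 2 + 4 * R * m) intervalIntegrable_const fun τ hτ => ?_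
  · rwa [intervalIntegral.integral_const, smul_eq_mul] at hstep
  · have hτ' : τ ∈ Icc a t := ⟨by linarith [hτ.1, hs.1], by linarith [hτ.2, hσ.2]⟩
    have hτT : τ ∈ Icc 0 T := ⟨ha.trans hτ'.1, hτ'.2.trans ht⟩
    exact h.integral_weighted_sub_initial_le hκ hκL ha' hτT (hC a ha' τ hτT) hR hm₀
      (abs_le_of_sq_le_sq' ((hlower τ).trans (hm τ hτ')) hm₀).2

lemma weightedEnergy_shift_sub_le_two_mul (h : IsKdVFlow L T K φ u) (hκ : 0 < κ)
    (hκL : κ * L ≤ 1)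
    (hC : ∀ s ∈ Icc 0 T, ∀ t ∈ Icc 0 T, IsGrowthBound L κ K (u s) (u t) C) {a t r : ℝ}
    (ha : 0 ≤ a) (hat : a < t) (hr : 0 ≤ r) (ht : t + r ≤ T) (hCt : C * (t - a) ≤ 1 / 2)
    (hbdd : ∀ s ∈ Ioo a (t + r), ∃ S, ∀ τ ∈ Ioo s (t + r), kdvSpeed L φ u τ ≤ S) :
    weightedEnergy L κ (u (t + r) - u t) ≤ 2 * weightedEnergy L κ (u (a + r) - u a) := by
  have ha' : a ∈ Icc 0 T := ⟨ha, by linarith⟩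
  have hE := continuous_weightedEnergy L κ (z := fun τ => u (τ + r) - u τ)
    (h.continuous_shift_sub r)
  refine ge_of_tendsto ((hE.const_mul 2).continuousAt.mono_left nhdsWithin_le_nhds)
    (?_ : ∀ᶠ s in 𝓝[>] a, _)
  filter_upwards [Ioo_mem_nhdsGT hat] with s hs
  obtain ⟨S, hS⟩ := hbdd s ⟨hs.1, by linarith [hs.2]⟩
  have hCs : C * (t - s) ≤ 1 / 2 := (mul_le_mul_of_nonneg_left (by linarith [hs.1])
    ((hC a ha' a ha').nonneg hκ.le)).trans hCt
  have hdouble := h.weightedEnergy_shift_sub_add_le_two_mul hκ hκL (ha.trans hs.1.le) hs.2.le hr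
    ht hS (γ := fun _ => C) intervalIntegrable_const (fun τ hτ => hC _ ?_ _ ?_)
    (by rwa [intervalIntegral.integral_const, smul_eq_mul, mul_comm]) le_rfl
    fun τ _ => sq_nonneg _
  · simpa only [mul_zero, zero_mul, add_zero] using hdouble
  all_goals exact ⟨by linarith [hτ.1, hs.1], by linarith [hτ.2]⟩

lemma kdvSpeed_le_twelve_mul (h : IsKdVFlow L T K φ u) (hκ : 0 < κ) (hκL : κ * L ≤ 1)
    (hC : ∀ s ∈ Icc 0 T, ∀ t ∈ Icc 0 T, IsGrowthBound L κ K (u s) (u t) C) {a t δ : ℝ}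
    (ha : 0 ≤ a) (hat : a < t) (hδ : 0 < δ) (htδ : t + δ ≤ T) (hCt : C * (t - a) ≤ 1 / 2)
    (hbdd : ∀ s ∈ Ioo a (t + δ), ∃ S, ∀ τ ∈ Ioo s (t + δ), kdvSpeed L φ u τ ≤ S) :
    kdvSpeed L φ u t ≤ 12 * kdvSpeed L φ u a := by
  have hL := h.length_pos.le
  have ht : t ∈ Ioo 0 T := ⟨by linarith, by linarith⟩
  have ha' : a ∈ Icc 0 T := ⟨ha, by linarith⟩
  have hS₀ : 0 ≤ kdvSpeed L φ u a := L2norm_nonneg L _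
  refine h.kdvSpeed_le_of_eventually_le ht ?_
  filter_upwards [Ioo_mem_nhdsGT (lt_min hδ (sub_pos.2 hat))] with r hr
  have hrδ : r < δ := hr.2.trans_le (min_le_left _ _)
  have hrt : r < t - a := hr.2.trans_le (min_le_right _ _)
  have hbdd' : ∀ b ≤ t + δ, ∀ s ∈ Ioo a b, ∃ S, ∀ τ ∈ Ioo s b, kdvSpeed L φ u τ ≤ S :=
    fun b hb s hs => (hbdd s ⟨hs.1, hs.2.trans_le hb⟩).imp fun S hS τ hτ =>
      hS τ ⟨hτ.1, hτ.2.trans_le hb⟩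
  have hinit := h.weightedEnergy_sub_initial_le hκ hκL hC ha (lt_add_of_pos_right a hr.1)
    (by linarith) ((mul_le_mul_of_nonneg_left (by linarith)
      ((hC a ha' a ha').nonneg hκ.le)).trans hCt) le_rfl (hbdd' (a + r) (by linarith))
  have hdouble := h.weightedEnergy_shift_sub_le_two_mul hκ hκL hC ha hat hr.1.le (by linarith)
    hCt (hbdd' (t + r) (by linarith))
  have hlower := sq_L2norm_le_weightedEnergy hL hκ.le (h.continuousOn_sub t (t + r))
  rw [add_sub_cancel_left] at hinit
  refine (abs_le_of_sq_le_sq' ?_ (by have := hr.1; positivity)).2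
  linarith [sq_nonneg (kdvSpeed L φ u a * r)]

end IsKdVFlow

/-! ### Boundedness from forward propagation -/

lemma bddAbove_image_of_isBoundedUnder {X : Type*} [TopologicalSpace X] {g : X → ℝ} {A : Set X}
    (hA : IsCompact A) (h : ∀ x ∈ A, (𝓝[A] x).IsBoundedUnder (· ≤ ·) g) : BddAbove (g '' A) := by
  refine hA.induction_on (p := fun s => BddAbove (g '' s)) (by simp)
    (fun _ _ hst ht => ht.mono (image_mono hst))
    (fun s t hs ht => by rw [image_union]; exact hs.union ht) fun x hx => ?_
  obtain ⟨R, hR⟩ := h x hx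
  exact ⟨_, hR, R, forall_mem_image.2 fun _ hy => hy⟩

lemma isClosed_setOf_not_isBoundedUnder {X : Type*} [TopologicalSpace X] {g : X → ℝ} {A : Set X}
    (hA : IsClosed A) : IsClosed {x ∈ A | ¬ (𝓝[A] x).IsBoundedUnder (· ≤ ·) g} := by
  refine isClosed_of_closure_subset fun x hx => ?_
  have hxA : x ∈ A := hA.closure_subset_iff.2 (sep_subset _ _) hx
  refine ⟨hxA, fun ⟨R, hR⟩ => ?_⟩
  obtain ⟨U, hU, hUR⟩ := mem_nhdsWithin_iff_exists_mem_nhds_inter.1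
    (eventually_eventually_nhdsWithin.2 (eventually_map.1 hR))
  obtain ⟨y, hyU, hyA, hy⟩ := mem_closure_iff_nhds.1 hx U hU
  exact hy ⟨R, eventually_map.2 (hUR ⟨hyU, hyA⟩)⟩

lemma exists_eventually_mem_of_isClosed_cover {X : Type*} [MetricSpace X] [CompleteSpace X]
    {B : Set X} (hB : IsClosed B) (hne : B.Nonempty) {S : ℕ → Set X} (hS : ∀ n, IsClosed (S n))
    (hcover : B ⊆ ⋃ n, S n) : ∃ n, ∃ b ∈ B, ∀ᶠ x in 𝓝[B] b, x ∈ S n := by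
  have : Nonempty B := hne.to_subtype
  have : CompleteSpace B := hB.completeSpace_coe
  obtain ⟨n, b, hb⟩ := nonempty_interior_of_iUnion_of_closed (X := B)
    (f := fun n => Subtype.val ⁻¹' S n) (fun n => (hS n).preimage continuous_subtype_val)
    (by rw [← preimage_iUnion]; exact eq_univ_of_forall fun x => hcover x.2)
  refine ⟨n, b, b.2, ?_⟩
  rw [nhdsWithin_eq_map_subtype_coe b.2]
  exact mem_interior_iff_mem_nhds.1 hb

lemma exists_last_mem_of_isClosed {B : Set ℝ} (hB : IsClosed B) {p τ : ℝ} (hpτ : p ≤ τ) :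
    ∃ a ∈ Icc p τ, a ∈ insert p B ∧ ∀ σ ∈ Ioc a τ, σ ∉ B := by
  have hclosed : IsClosed (insert p B) := isClosed_singleton.union hB
  obtain ⟨a, ⟨haB, ha⟩, hmax⟩ := (isCompact_Icc.inter_left hclosed).exists_isGreatest
    ⟨p, mem_insert p B, left_mem_Icc.2 hpτ⟩
  exact ⟨a, ha, haB, fun σ hσ hσB =>
    hσ.1.not_ge (hmax ⟨mem_insert_of_mem p hσB, ha.1.trans hσ.1.le, hσ.2⟩)⟩

section Propagation

variable {g : ℝ → ℝ} {T ρ c : ℝ}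

lemma exists_bddAbove_image_Icc_of_isBoundedUnder {a t : ℝ} (ha : 0 ≤ a) (hat : a < t)
    (htT : t < T) (h : ∀ τ ∈ Ioc a t, (𝓝[Icc 0 T] τ).IsBoundedUnder (· ≤ ·) g) :
    ∃ δ > 0, t + δ ≤ T ∧ ∀ s ∈ Ioc a t, BddAbove (g '' Icc s (t + δ)) := by
  obtain ⟨R, hR⟩ := h t (right_mem_Ioc.2 hat)
  have hnear : ∀ᶠ σ in 𝓝[≥] t, g σ ≤ R :=
    (nhdsWithin_Icc_eq_nhdsGE htT ▸ nhdsWithin_mono t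
      (Icc_subset_Icc_left (ha.trans hat.le))) (eventually_map.1 hR)
  obtain ⟨b, hb, hbR⟩ := (mem_nhdsGE_iff_exists_mem_Ioc_Ico_subset htT).1 hnear
  refine ⟨(b - t) / 2, by linarith [hb.1], by linarith [hb.1, hb.2], fun s hs => ?_⟩
  rw [← Icc_union_Icc_eq_Icc hs.2 (by linarith [hb.1] : t ≤ t + (b - t) / 2), image_union]
  refine (bddAbove_image_of_isBoundedUnder isCompact_Icc fun τ hτ => ?_).union
    ⟨R, forall_mem_image.2 fun σ hσ => hbR ⟨hσ.1, by linarith [hσ.2, hb.1]⟩⟩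
  exact (h τ ⟨hs.1.trans_le hτ.1, hτ.2⟩).mono
    (nhdsWithin_mono τ (Icc_subset_Icc (by linarith [hs.1]) htT.le))

lemma le_of_forward_propagation {B : Set ℝ} (hB : IsClosed B) {p τ R : ℝ} (hpτ : p ≤ τ)
    (hR₀ : 0 ≤ R) (hc : 0 ≤ c) (hR : ∀ a ∈ insert p B, a ∈ Icc p τ → g a ≤ R)
    (h : ∀ a ∈ Ico p τ, (∀ σ ∈ Ioc a τ, σ ∉ B) → g τ ≤ c * g a) : g τ ≤ (1 + c) * R := by
  obtain ⟨a, ha, haB, hfree⟩ := exists_last_mem_of_isClosed hB hpτ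
  have haR := hR a haB ha
  rcases ha.2.eq_or_lt with rfl | haτ
  · linarith [mul_nonneg hc hR₀]
  · linarith [h a ⟨ha.1, haτ⟩ hfree, mul_le_mul_of_nonneg_left haR hc]

/-- By Baire, the closed set of times near which `g` is unbounded would contain a point near which
`g` is bounded along the set; propagation from the last time in the set then bounds `g`. -/
lemma bddAbove_image_of_forward_propagation (hg : ∀ t, 0 ≤ g t) (hρ : 0 < ρ) (hc : 0 ≤ c)
    {S : ℕ → Set ℝ} (hS : ∀ n, IsClosed (S n)) (hcover : Icc 0 T ⊆ ⋃ n, S n)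
    (hgS : ∀ n, BddAbove (g '' S n))
    (hprop : ∀ a t δ, 0 ≤ a → a < t → 0 < δ → t + δ ≤ T → t - a ≤ ρ →
      (∀ s ∈ Ioc a t, BddAbove (g '' Icc s (t + δ))) → g t ≤ c * g a) :
    BddAbove (g '' Icc 0 T) := by
  refine bddAbove_image_of_isBoundedUnder isCompact_Icc fun t ht => ?_
  by_contra hbad
  set B := {τ ∈ Icc 0 T | ¬ (𝓝[Icc 0 T] τ).IsBoundedUnder (· ≤ ·) g}
  have hB : IsClosed B := isClosed_setOf_not_isBoundedUnder isClosed_Icc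
  obtain ⟨n, b, hbB, hb⟩ := exists_eventually_mem_of_isClosed_cover hB ⟨t, ht, hbad⟩ hS
    ((sep_subset _ _).trans hcover)
  obtain ⟨R, hR⟩ := hgS n
  obtain ⟨r, hr, hball⟩ := Metric.mem_nhdsWithin_iff.1 hb
  set ℓ := min (r / 2) (ρ / 2)
  have hℓ₀ : 0 < ℓ := by positivity
  have hℓr : ℓ ≤ r / 2 := min_le_left _ _
  have hℓρ : ℓ ≤ ρ / 2 := min_le_right _ _
  set p := max 0 (b - ℓ)
  have hpb : b - ℓ ≤ p := le_max_right _ _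
  refine hbB.2 ⟨max ((1 + c) * max R (g p)) (g T), eventually_map.2 ?_⟩
  filter_upwards [self_mem_nhdsWithin,
    mem_nhdsWithin_of_mem_nhds (Ioo_mem_nhds (sub_lt_self b hℓ₀) (lt_add_of_pos_right b hℓ₀))]
    with τ hτ hτb
  rcases hτ.2.eq_or_lt with rfl | hτT
  · exact le_max_right _ _
  refine le_max_of_le_left (le_of_forward_propagation hB (max_le hτ.1 hτb.1.le)
    ((hg p).trans (le_max_right _ _)) hc (fun a haB ha => ?_) fun a ha hfree => ?_)
  · rcases haB with rfl | haB
    · exact le_max_right _ _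
    · refine le_max_of_le_left (hR (mem_image_of_mem g (hball ⟨?_, haB⟩)))
      rw [Metric.mem_ball, Real.dist_eq, abs_lt]
      constructor <;> linarith [ha.1, ha.2, hτb.2]
  · have ha₀ : 0 ≤ a := (le_max_left _ _).trans ha.1
    obtain ⟨δ, hδ, hδT, hbdd⟩ := exists_bddAbove_image_Icc_of_isBoundedUnder ha₀ ha.2 hτT
      fun σ hσ => not_not.1 fun hσB => hfree σ hσ ⟨⟨by linarith [hσ.1], by linarith [hσ.2]⟩, hσB⟩
    exact hprop a τ δ ha₀ ha.2 hδ hδT (by linarith [ha.1, hτb.2]) hbdd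

end Propagation

section FiniteDifferences

lemma exists_iterate_fwdDiff_eq {F : ℕ → ℝ → ℝ} {n : ℕ} {x δ : ℝ} (hδ : 0 < δ)
    (hF : ∀ k < n, ∀ y ∈ Icc x (x + n * δ), HasDerivAt (F k) (F (k + 1) y) y) :
    ∃ ξ ∈ Icc x (x + n * δ), (fwdDiff δ)^[n] (F 0) x = δ ^ n * F n ξ := by
  induction n generalizing F with
  | zero => exact ⟨x, by simp, by simp⟩
  | succ n ih =>
    push_cast at hF ⊢
    obtain ⟨ξ, hξ, hξ_eq⟩ := ih (F := fun k => fwdDiff δ (F k)) fun k hk y hy =>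
      ((hF k (by lia) (y + δ) ⟨by linarith [hy.1], by linarith [hy.2]⟩).comp_add_const y δ).fun_sub
        (hF k (by lia) y ⟨hy.1, by linarith [hy.2]⟩)
    have hsub : Icc ξ (ξ + δ) ⊆ Icc x (x + (n + 1) * δ) :=
      Icc_subset_Icc hξ.1 (by linarith [hξ.2])
    obtain ⟨ζ, hζ, hζ_eq⟩ := exists_hasDerivAt_eq_slope (F n) (F (n + 1)) (lt_add_of_pos_right ξ hδ)
      (fun y hy => (hF n n.lt_succ_self y (hsub hy)).continuousAt.continuousWithinAt)
      fun y hy => hF n n.lt_succ_self y (hsub (Ioo_subset_Icc_self hy))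
    refine ⟨ζ, hsub (Ioo_subset_Icc_self hζ), ?_⟩
    rw [Function.iterate_succ_apply, hξ_eq, hζ_eq, add_sub_cancel_left, fwdDiff, pow_succ]
    field_simp

lemma continuous_iterate_fwdDiff {X : Type*} [TopologicalSpace X] {f : X → ℝ → ℝ}
    (hf : ∀ x, Continuous fun t => f t x) (n : ℕ) (δ x : ℝ) :
    Continuous fun t => (fwdDiff δ)^[n] (f t) x := by
  simp_rw [fwdDiff_iter_eq_sum_shift]
  exact continuous_finsetSum _ fun k _ =>
    (hf (x + k • δ)).const_smul ((-1 : ℤ) ^ (n - k) * n.choose k)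

end FiniteDifferences

namespace IsKdVProfile

variable {L M φ : ℝ} {f : ℝ → ℝ}

/-- Bounds on the third derivative are inherited by pointwise limits, since they can be read off
from third differences. -/
lemma forall_abs_deriv_three_le_iff (h : IsKdVProfile L f) :
    (∀ x ∈ Ioo 0 L, |∂[L,3] f x| ≤ M) ↔ ∀ x δ : ℝ, 0 < x → 0 < δ → x + 3 * δ < L →
      |(fwdDiff δ)^[3] f x| ≤ δ ^ 3 * M := by
  have hdiff : ∀ x δ : ℝ, 0 < x → 0 < δ → x + 3 * δ < L → ∃ ξ ∈ Icc x (x + 3 * δ),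
      |(fwdDiff δ)^[3] f x| = δ ^ 3 * |∂[L,3] f ξ| := fun x δ hx hδ hxδ => by
    obtain ⟨ξ, hξ, hξ_eq⟩ := exists_iterate_fwdDiff_eq (F := fun k => ∂[L,k] f) (n := 3) (x := x) hδ
      fun k hk y hy => h.hasDerivAt_deriv k ⟨hx.trans_le hy.1, hy.2.trans_lt hxδ⟩ hk
    refine ⟨ξ, hξ, ?_⟩
    rw [← abs_of_pos (pow_pos hδ 3), ← abs_mul, ← hξ_eq]
    simp only [spaceDeriv, iteratedDerivWithin_zero]
  refine ⟨fun hM x δ hx hδ hxδ => ?_, fun hM x hx => ?_⟩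
  · obtain ⟨ξ, hξ, hξ_eq⟩ := hdiff x δ hx hδ hxδ
    rw [hξ_eq]
    gcongr
    exact hM ξ ⟨hx.trans_le hξ.1, hξ.2.trans_lt hxδ⟩
  · by_contra! hlt
    have hnear : ∀ᶠ y in 𝓝 x, y < L ∧ M < |∂[L,3] f y| :=
      (eventually_lt_nhds hx.2).and <|
        ((h.continuousOn_deriv 3).continuousAt (Icc_mem_nhds hx.1 hx.2)).abs.eventually
          (lt_mem_nhds hlt)
    obtain ⟨b, hxb, hb⟩ := exists_Ico_subset_of_mem_nhds hnear ⟨L, hx.2⟩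
    have hδ : 0 < (b - x) / 4 := by linarith
    have hmem : ∀ ξ ∈ Icc x (x + 3 * ((b - x) / 4)), ξ < L ∧ M < |∂[L,3] f ξ| :=
      fun ξ hξ => hb ⟨hξ.1, by linarith [hξ.2]⟩
    have hxδ := (hmem _ (right_mem_Icc.2 (by linarith))).1
    obtain ⟨ξ, hξ, hξ_eq⟩ := hdiff x _ hx.1 hδ hxδ
    have hle := hM x _ hx.1 hδ hxδ
    rw [hξ_eq] at hle
    exact ((hmem ξ hξ).2.trans_le (le_of_mul_le_mul_left hle (by positivity))).false

lemma L2norm_kdvOp_le (h : IsKdVProfile L f) (hφ : φ ∈ Icc (0 : ℝ) 1)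
    (hM : ∀ x ∈ Icc 0 L, |f x| ≤ M) :
    L2norm L (kdvOp L φ f) ≤
      L2norm L (∂[L,3] f) + (1 + M) * (L2norm L (∂[L,3] f) / 4 + 5 * L2norm L f) := by
  have hL := h.length_pos.le
  have hM₀ : 0 ≤ M := (abs_nonneg _).trans (hM 0 (left_mem_Icc.2 hL))
  have c₁ := h.continuousOn_deriv 1
  have c₃ := h.continuousOn_deriv 3
  have ha := le_div_four_add_of_pow_three_le (L2norm_nonneg L (∂[L,3] f)) (L2norm_nonneg L f)
    h.L2norm_deriv_one_pow_three_le
  have hnl : L2norm L (fun x => φ * (f * ∂[L,1] f) x) ≤ M * L2norm L (∂[L,1] f) := by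
    rw [L2norm_const_mul, abs_of_nonneg hφ.1]
    exact (mul_le_of_le_one_left (L2norm_nonneg _ _) hφ.2).trans
      (L2norm_mul_le hL h.continuousOn c₁ hM)
  calc L2norm L (kdvOp L φ f)
      ≤ L2norm L (∂[L,1] f) + L2norm L (∂[L,3] f) + M * L2norm L (∂[L,1] f) :=
        (L2norm_add_le hL (f := ∂[L,1] f + ∂[L,3] f) (c₁.add c₃)
          (continuousOn_const.mul (h.continuousOn.mul c₁))).trans
          (add_le_add (L2norm_add_le hL c₁ c₃) hnl)
    _ = L2norm L (∂[L,3] f) + (1 + M) * L2norm L (∂[L,1] f) := by ring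
    _ ≤ _ := by gcongr

end IsKdVProfile

namespace IsKdVFlow

variable {L T K : ℝ} {φ : ℝ → ℝ} {u : ℝ → ℝ → ℝ}

lemma isClosed_setOf_abs_deriv_three_le (h : IsKdVFlow L T K φ u) (M : ℝ) :
    IsClosed {t ∈ Icc 0 T | ∀ x ∈ Ioo 0 L, |∂[L,3] (u t) x| ≤ M} := by
  have hset : {t ∈ Icc 0 T | ∀ x ∈ Ioo 0 L, |∂[L,3] (u t) x| ≤ M} =
      Icc 0 T ∩ {t | ∀ x δ : ℝ, 0 < x → 0 < δ → x + 3 * δ < L →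
        |(fwdDiff δ)^[3] (u t) x| ≤ δ ^ 3 * M} := by
    ext t
    exact and_congr_right fun ht => (h.isKdVProfile t ht).forall_abs_deriv_three_le_iff
  rw [hset]
  simp only [ofPred_forall]
  refine isClosed_Icc.inter ?_
  refine isClosed_iInter fun x => isClosed_iInter fun δ => isClosed_iInter fun _ =>
    isClosed_iInter fun _ => isClosed_iInter fun _ => isClosed_le ?_ continuous_const
  exact (continuous_iterate_fwdDiff
    (fun x => h.continuous.comp (Continuous.prodMk_left x)) 3 δ x).abs

lemma exists_kdvSpeed_le_of_abs_deriv_three_le (h : IsKdVFlow L T K φ u) (N : ℝ) :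
    ∃ R, ∀ t ∈ Icc 0 T, (∀ x ∈ Ioo 0 L, |∂[L,3] (u t) x| ≤ N) → kdvSpeed L φ u t ≤ R := by
  obtain ⟨M, hM⟩ := h.exists_abs_le
  have hL := h.length_pos.le
  have hM₀ : 0 ≤ M := (abs_nonneg _).trans (hM 0 (left_mem_Icc.2 h.time_pos.le) 0
    (left_mem_Icc.2 hL))
  refine ⟨|N| * √L + (1 + M) * (|N| * √L / 4 + 5 * (|M| * √L)), fun t ht hN => ?_⟩
  have hp := h.isKdVProfile t ht
  have h₀ := L2norm_le_of_abs_le hL hp.continuousOn fun x hx => hM t ht x (Ioo_subset_Icc_self hx)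
  have h₃ := L2norm_le_of_abs_le hL (hp.continuousOn_deriv 3) hN
  refine (hp.L2norm_kdvOp_le (h.coeff_mem t ht) (hM t ht)).trans ?_
  gcongr

theorem exists_kdvSpeed_le (h : IsKdVFlow L T K φ u) :
    ∃ R, ∀ t ∈ Icc 0 T, kdvSpeed L φ u t ≤ R := by
  have hL := h.length_pos
  obtain ⟨C, hC⟩ := h.exists_isGrowthBound (1 / L)
  have hκ : 0 < 1 / L := one_div_pos.2 hL
  have hC₀ : 0 ≤ C := (hC 0 (left_mem_Icc.2 h.time_pos.le) 0
    (left_mem_Icc.2 h.time_pos.le)).nonneg hκ.le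
  have hCρ : ∀ ρ, ρ ≤ 1 / (2 * (C + 1)) → C * ρ ≤ 1 / 2 := fun ρ hρ =>
    (mul_le_mul_of_nonneg_left hρ hC₀).trans (by
      rw [mul_one_div, div_le_div_iff₀ (by positivity) two_pos]
      linarith)
  suffices hbdd : BddAbove (kdvSpeed L φ u '' Icc 0 T) from
    hbdd.imp fun R hR t ht => hR (mem_image_of_mem _ ht)
  refine bddAbove_image_of_forward_propagation (c := 12) (ρ := 1 / (2 * (C + 1)))
    (S := fun n : ℕ => {t ∈ Icc 0 T | ∀ x ∈ Ioo 0 L, |∂[L,3] (u t) x| ≤ n})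
    (fun t => L2norm_nonneg L _) (by positivity) (by norm_num)
    (fun n => h.isClosed_setOf_abs_deriv_three_le n) (fun t ht => ?_) (fun n => ?_) ?_
  · obtain ⟨M, hM⟩ := isCompact_Icc.exists_bound_of_continuousOn
      ((h.isKdVProfile t ht).continuousOn_deriv 3)
    obtain ⟨n, hn⟩ := exists_nat_ge M
    exact mem_iUnion.2 ⟨n, ht, fun x hx => (hM x (Ioo_subset_Icc_self hx)).trans hn⟩
  · obtain ⟨R, hR⟩ := h.exists_kdvSpeed_le_of_abs_deriv_three_le n
    exact ⟨R, forall_mem_image.2 fun t ht => hR t ht.1 ht.2⟩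
  · intro a t δ ha hat hδ htδ hρ hbdd
    refine h.kdvSpeed_le_twelve_mul hκ (by rw [one_div_mul_cancel hL.ne']) hC ha hat hδ htδ
      (hCρ _ hρ) fun s hs => ?_
    obtain ⟨R, hR⟩ := hbdd (min s t) ⟨lt_min hs.1 hat, min_le_right _ _⟩
    exact ⟨R, fun τ hτ => hR (mem_image_of_mem _ ⟨(min_le_left _ _).trans hτ.1.le, hτ.2.le⟩)⟩

end IsKdVFlow

/-! ### Dissipation and the Kato smoothing effect -/

namespace IsKdVFlow

variable {L T K κ : ℝ} {φ : ℝ → ℝ} {u : ℝ → ℝ → ℝ}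

lemma L2norm_le_initial (h : IsKdVFlow L T K φ u) {t : ℝ} (ht : t ∈ Icc 0 T) :
    L2norm L (u t) ≤ L2norm L (u 0) := by
  have hL := h.length_pos.le
  obtain ⟨R, hR⟩ := h.exists_kdvSpeed_le
  have hstep := h.weightedEnergy_sub_sub_le 0 (w := 0) continuous_zero le_rfl ht.1 ht.2
    (fun τ hτ => hR τ ⟨hτ.1.le, hτ.2.le.trans ht.2⟩) (β := fun _ => 0) intervalIntegrable_const
    fun τ hτ => ?_
  · simp only [sub_zero, weightedEnergy, zero_mul, add_zero, one_mul, ← sq_L2norm hL,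
      intervalIntegral.integral_zero, sub_nonpos] at hstep
    exact (abs_le_of_sq_le_sq' hstep (L2norm_nonneg L _)).2
  · have hdiss := (h.isKdVProfile τ
      ⟨hτ.1.le, hτ.2.le.trans ht.2⟩).integral_self_mul_neg_kdvOp_nonpos (φ τ)
    simp only [sub_zero, zero_mul, add_zero, mul_assoc, one_mul,
      intervalIntegral.integral_const_mul]
    linarith

lemma L2norm_deriv_three_le (h : IsKdVFlow L T K φ u) {t N R : ℝ} (ht : t ∈ Icc 0 T)
    (hN : L2norm L (u 0) ≤ N) (hR : kdvSpeed L φ u t ≤ R) :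
    L2norm L (∂[L,3] (u t)) ≤ 2 * R + 10 * N + 48 * N ^ 3 := by
  have hle := (h.L2norm_le_initial ht).trans hN
  have hcube := pow_le_pow_left₀ (L2norm_nonneg L (u t)) hle 3
  have hthree := (h.isKdVProfile t ht).L2norm_deriv_three_le (h.coeff_mem t ht)
  rw [kdvSpeed] at hR
  linarith

lemma exists_L2norm_deriv_one_le (h : IsKdVFlow L T K φ u) :
    ∃ M, ∀ t ∈ Icc 0 T, L2norm L (∂[L,1] (u t)) ≤ M := by
  obtain ⟨R, hR⟩ := h.exists_kdvSpeed_le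
  set N := L2norm L (u 0)
  set D := 2 * R + 10 * N + 48 * N ^ 3
  refine ⟨D / 4 + 5 * N, fun t ht => ?_⟩
  have hD := h.L2norm_deriv_three_le ht le_rfl (hR t ht)
  refine le_div_four_add_of_pow_three_le ((L2norm_nonneg L _).trans hD) (L2norm_nonneg L (u 0))
    ((h.isKdVProfile t ht).L2norm_deriv_one_pow_three_le.trans ?_)
  have hN := h.L2norm_le_initial ht
  have hnonneg := L2norm_nonneg L (u t)
  gcongr
  exact mul_nonneg (by norm_num) ((L2norm_nonneg L _).trans hD)

lemma intervalIntegrable_sq_L2norm_deriv_one (h : IsKdVFlow L T K φ u) :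
    IntervalIntegrable (fun τ => L2norm L (∂[L,1] (u τ)) ^ 2) volume 0 T := by
  have hL := h.length_pos.le
  obtain ⟨M, hM⟩ := h.exists_L2norm_deriv_one_le
  have hmeas : StronglyMeasurable fun t => ∫ x in Ioo 0 L, deriv (u t) x ^ 2 :=
    ((measurable_deriv_with_param h.continuous).pow_const
      2).stronglyMeasurable.integral_prod_right
  have heq : ∀ t ∈ Icc 0 T, ∫ x in Ioo 0 L, deriv (u t) x ^ 2 = L2norm L (∂[L,1] (u t)) ^ 2 :=
    fun t ht => by
      rw [sq_L2norm hL, intervalIntegral.integral_of_le hL, integral_Ioc_eq_integral_Ioo]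
      exact setIntegral_congr_fun measurableSet_Ioo fun x hx => by
        simp only [((h.isKdVProfile t ht).hasDerivAt hx).deriv]
  rw [intervalIntegrable_iff_integrableOn_Icc_of_le h.time_pos.le]
  refine IntegrableOn.congr_fun (Measure.integrableOn_of_bounded (M := M ^ 2) (by simp)
    hmeas.aestronglyMeasurable ?_) heq measurableSet_Icc
  filter_upwards [ae_restrict_mem measurableSet_Icc] with t ht
  rw [heq t ht, Real.norm_of_nonneg (sq_nonneg _)]
  exact pow_le_pow_left₀ (L2norm_nonneg L _) (hM t ht) 2

lemma two_mul_mul_mul_pow_three_le (hκ : 0 < κ) (c a e : ℝ) :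
    2 * c * a * e ^ 3 ≤ κ / 2 * a ^ 2 + 2 * c ^ 2 / κ * e ^ 6 := by
  have hsq : κ / 2 * a ^ 2 + 2 * c ^ 2 / κ * e ^ 6 - 2 * c * a * e ^ 3 =
      (κ * a - 2 * c * e ^ 3) ^ 2 / (2 * κ) := by
    field_simp
    ring
  have hnonneg : 0 ≤ (κ * a - 2 * c * e ^ 3) ^ 2 / (2 * κ) := by positivity
  linarith

lemma integral_weighted_self_le (h : IsKdVFlow L T K φ u) (hκ : 0 < κ) (hκL : κ * L ≤ 1)
    (hu₀ : L2norm L (u 0) ≤ 1) {τ : ℝ} (hτ : τ ∈ Icc 0 T) :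
    ∫ x in (0 : ℝ)..L, 2 * (1 + κ * x) * u τ x * -kdvOp L (φ τ) (u τ) x ≤
      (2 * κ + 2 * interactionConst κ K ^ 2 / κ) * L2norm L (u 0) ^ 2 -
        κ / 2 * L2norm L (∂[L,1] (u τ)) ^ 2 := by
  have hf := h.isKdVProfile τ hτ
  have hdiff := IsKdVProfile.integral_weighted_mul_sub_kdvOp_le (IsKdVProfile.zero h.length_pos)
    hf hκ hκL (h.coeff_mem τ hτ) (h.coeff_mem τ hτ) h.variation_nonneg
    (by simpa [L2norm] using mul_nonneg h.variation_nonneg (abs_nonneg _))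
    (B := √(2 * (L2norm L (u τ) * L2norm L (∂[L,1] (u τ)))))
    fun x hx => by simpa using Real.abs_le_sqrt (hf.sq_le hx)
  set e := L2norm L (u τ)
  set a := L2norm L (∂[L,1] (u τ))
  have he : 0 ≤ e := L2norm_nonneg L _
  have ha : 0 ≤ a := L2norm_nonneg L _
  have he_le : e ≤ L2norm L (u 0) := h.L2norm_le_initial hτ
  have hsq : e ^ 2 ≤ L2norm L (u 0) ^ 2 := pow_le_pow_left₀ he he_le 2
  have hsix : e ^ 6 ≤ L2norm L (u 0) ^ 2 :=
    (pow_le_pow_of_le_one he (he_le.trans hu₀) (by norm_num)).trans hsq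
  simp only [kdvOp_zero, sub_zero] at hdiff
  rw [Real.sq_sqrt (by positivity)] at hdiff
  have hyoung := two_mul_mul_mul_pow_three_le hκ (interactionConst κ K) a e
  have h₁ : 2 * κ * e ^ 2 ≤ 2 * κ * L2norm L (u 0) ^ 2 := by gcongr
  have h₂ : 2 * interactionConst κ K ^ 2 / κ * e ^ 6 ≤
      2 * interactionConst κ K ^ 2 / κ * L2norm L (u 0) ^ 2 := by gcongr
  linarith

lemma integral_sq_L2norm_deriv_one_le (h : IsKdVFlow L T K φ u) (hκ : 0 < κ) (hκL : κ * L ≤ 1)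
    (hu₀ : L2norm L (u 0) ≤ 1) :
    κ / 2 * ∫ τ in (0 : ℝ)..T, L2norm L (∂[L,1] (u τ)) ^ 2 ≤
      (2 + (2 * κ + 2 * interactionConst κ K ^ 2 / κ) * T) * L2norm L (u 0) ^ 2 := by
  have hL := h.length_pos.le
  obtain ⟨R, hR⟩ := h.exists_kdvSpeed_le
  have hint := h.intervalIntegrable_sq_L2norm_deriv_one.const_mul (κ / 2)
  have hstep := h.weightedEnergy_sub_sub_le κ (w := 0) continuous_zero le_rfl h.time_pos.le le_rfl
    (fun τ hτ => hR τ (Ioo_subset_Icc_self hτ)) (intervalIntegrable_const.sub hint) fun τ hτ => by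
      simpa only [sub_zero] using
        h.integral_weighted_self_le hκ hκL hu₀ (Ioo_subset_Icc_self hτ)
  rw [sub_zero, sub_zero, intervalIntegral.integral_sub intervalIntegrable_const hint,
    intervalIntegral.integral_const, intervalIntegral.integral_const_mul, smul_eq_mul] at hstep
  have hfinal := (sq_nonneg _).trans
    (sq_L2norm_le_weightedEnergy hL hκ.le (h.continuousOn_slice T))
  have hinitial := weightedEnergy_le_two_mul_sq_L2norm hL hκ.le hκL (h.continuousOn_slice 0)
  linarith

end IsKdVFlow

/-! ### Uniform doubling of the differences -/

/-- Over `[0,T]` the squared `L²` norm of `u (τ + r) - u τ` grows at most by the factor `4`, and the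
weight slope `κ` measures the dissipation that comes with the growth. -/
def HasShiftDoubling (L T κ : ℝ) (u : ℝ → ℝ → ℝ) : Prop :=
  ∀ s t r c, 0 ≤ s → s ≤ t → 0 ≤ r → t + r ≤ T → 0 ≤ c →
    (∀ τ ∈ Ioo s t, c ≤ L2norm L (∂[L,1] (u (τ + r) - u τ)) ^ 2) →
    L2norm L (u (t + r) - u t) ^ 2 + κ * c * (t - s) ≤ 4 * L2norm L (u (s + r) - u s) ^ 2

lemma intervalIntegrable_comp_add_right {a : ℝ → ℝ} {T s t r : ℝ}
    (ha : IntervalIntegrable a volume 0 T) (hs : 0 ≤ s) (hst : s ≤ t) (hr : 0 ≤ r)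
    (ht : t + r ≤ T) : IntervalIntegrable (fun τ => a (τ + r)) volume s t := by
  have hsub : IntervalIntegrable a volume (s + r) (t + r) := ha.mono_set <| by
    rw [uIcc_of_le (by linarith), uIcc_of_le (by linarith)]
    exact Icc_subset_Icc (by linarith) ht
  simpa using hsub.comp_add_right r

lemma integral_comp_add_right_le {a : ℝ → ℝ} {T s t r : ℝ} (ha₀ : 0 ≤ a)
    (ha : IntervalIntegrable a volume 0 T) (hs : 0 ≤ s) (hst : s ≤ t) (hr : 0 ≤ r)
    (ht : t + r ≤ T) : ∫ τ in s..t, a (τ + r) ≤ ∫ τ in (0 : ℝ)..T, a τ := by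
  rw [intervalIntegral.integral_comp_add_right]
  exact intervalIntegral.integral_mono_interval (by linarith) (by linarith) ht
    (Eventually.of_forall ha₀) ha

lemma IsKdVProfile.isGrowthBound {L κ : ℝ} {f g : ℝ → ℝ} (hf : IsKdVProfile L f)
    (hg : IsKdVProfile L g) (hκ : 0 ≤ κ) (K : ℝ) :
    IsGrowthBound L κ K f g (2 * κ + 8 * L * interactionConst κ K *
      (L2norm L (∂[L,1] f) ^ 2 + L2norm L (∂[L,1] g) ^ 2)) := by
  have hL := hf.length_pos.le
  refine ⟨√(4 * L * L2norm L (∂[L,1] f) ^ 2) + √(4 * L * L2norm L (∂[L,1] g) ^ 2),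
    fun x hx => add_le_add (Real.abs_le_sqrt (hf.sq_le_deriv_one hx))
      (Real.abs_le_sqrt (hg.sq_le_deriv_one hx)), ?_⟩
  have hsq := add_sq_le (a := √(4 * L * L2norm L (∂[L,1] f) ^ 2))
    (b := √(4 * L * L2norm L (∂[L,1] g) ^ 2))
  rw [Real.sq_sqrt (by positivity), Real.sq_sqrt (by positivity)] at hsq
  linarith [mul_le_mul_of_nonneg_left hsq (interactionConst_nonneg hκ K)]

namespace IsKdVFlow

variable {L T K κ : ℝ} {φ : ℝ → ℝ} {u : ℝ → ℝ → ℝ}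

lemma hasShiftDoubling (h : IsKdVFlow L T K φ u) (hκ : 0 < κ) (hκL : κ * L ≤ 1)
    (hκT : κ * T ≤ 1 / 8)
    (hsmall :
      16 * L * interactionConst κ K * ∫ τ in (0 : ℝ)..T, L2norm L (∂[L,1] (u τ)) ^ 2 ≤ 1 / 4) :
    HasShiftDoubling L T κ u := by
  intro s t r c hs hst hr ht hc₀ hc
  have hL := h.length_pos.le
  obtain ⟨R, hR⟩ := h.exists_kdvSpeed_le
  set a : ℝ → ℝ := fun τ => L2norm L (∂[L,1] (u τ)) ^ 2
  have ha₀ : 0 ≤ a := fun τ => sq_nonneg _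
  have ha := h.intervalIntegrable_sq_L2norm_deriv_one
  have hnow : IntervalIntegrable a volume s t := by
    simpa using intervalIntegrable_comp_add_right ha hs hst le_rfl (by linarith)
  have hnow_le : ∫ τ in s..t, a τ ≤ ∫ τ in (0 : ℝ)..T, a τ := by
    simpa using integral_comp_add_right_le ha₀ ha hs hst le_rfl (by linarith)
  have hlater := intervalIntegrable_comp_add_right ha hs hst hr ht
  have hlater_le := integral_comp_add_right_le ha₀ ha hs hst hr ht
  have hsum := (hnow.add hlater).const_mul (8 * L * interactionConst κ K)
  have hmem : ∀ τ ∈ Ioo s t, τ ∈ Icc 0 T ∧ τ + r ∈ Icc 0 T := fun τ hτ =>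
    ⟨⟨by linarith [hτ.1], by linarith [hτ.2]⟩, ⟨by linarith [hτ.1], by linarith [hτ.2]⟩⟩
  have hhalf : ∫ τ in s..t, (2 * κ + 8 * L * interactionConst κ K * (a τ + a (τ + r))) ≤ 1 / 2 := by
    rw [intervalIntegral.integral_add intervalIntegrable_const hsum,
      intervalIntegral.integral_const, intervalIntegral.integral_const_mul,
      intervalIntegral.integral_add hnow hlater, smul_eq_mul]
    have hts : (t - s) * (2 * κ) ≤ T * (2 * κ) := by
      gcongr
      linarith
    have hconst := interactionConst_nonneg hκ.le K
    linarith [mul_le_mul_of_nonneg_left (add_le_add hnow_le hlater_le)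
      (by positivity : 0 ≤ 8 * L * interactionConst κ K)]
  have hdouble := h.weightedEnergy_shift_sub_add_le_two_mul hκ hκL hs hst hr ht
    (fun τ hτ => hR τ ⟨by linarith [hτ.1], by linarith [hτ.2]⟩)
    (intervalIntegrable_const.add hsum) (fun τ hτ =>
      (h.isKdVProfile τ (hmem τ hτ).1).isGrowthBound (h.isKdVProfile _ (hmem τ hτ).2) hκ.le K)
    hhalf hc₀ hc
  linarith [sq_L2norm_le_weightedEnergy hL hκ.le (h.continuousOn_sub t (t + r)),
    weightedEnergy_le_two_mul_sq_L2norm hL hκ.le hκL (h.continuousOn_sub s (s + r))]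

end IsKdVFlow

/-! ### Time regularity -/

/-- `u` is Lipschitz in time with values in `L²` on every `[t,T]`, with the constant `A t ^ (-3/2)`
that the scaling of the KdV equation predicts. -/
def HasLipschitzRate (L T : ℝ) (u : ℝ → ℝ → ℝ) (A : ℝ) : Prop :=
  ∀ t ∈ Ioo 0 T, ∀ r, 0 ≤ r → t + r ≤ T → L2norm L (u (t + r) - u t) ≤ A / (t * √t) * r

lemma HasLipschitzRate.mono {L T A B : ℝ} {u : ℝ → ℝ → ℝ} (h : HasLipschitzRate L T u A)
    (hAB : A ≤ B) : HasLipschitzRate L T u B := fun t ht r hr htr => by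
  have := ht.1
  exact (h t ht r hr htr).trans (by gcongr)

lemma HasShiftDoubling.eq_zero_or_exists_mem_Ioo {L T κ s t r : ℝ} {u : ℝ → ℝ → ℝ}
    (hu : HasShiftDoubling L T κ u) (hκ : 0 < κ) (hs : 0 ≤ s) (hst : s < t) (hr : 0 ≤ r)
    (ht : t + r ≤ T) :
    L2norm L (u (t + r) - u t) = 0 ∨ ∃ σ ∈ Ioo s t,
      κ * (t - s) * L2norm L (∂[L,1] (u (σ + r) - u σ)) ^ 2 ≤
        4 * L2norm L (u (s + r) - u s) ^ 2 := by
  refine or_iff_not_imp_right.2 fun hcon => ?_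
  push Not at hcon
  have hden : 0 < κ * (t - s) := mul_pos hκ (sub_pos.2 hst)
  have hdouble := hu s t r (4 * L2norm L (u (s + r) - u s) ^ 2 / (κ * (t - s))) hs hst.le hr ht
    (by positivity) fun σ hσ => (div_le_iff₀' hden).2 (hcon σ hσ).le
  rw [mul_right_comm, mul_div_cancel₀ _ hden.ne'] at hdouble
  exact pow_eq_zero_iff two_ne_zero |>.1 (le_antisymm (by linarith) (sq_nonneg _))

namespace IsKdVFlow

variable {L T K κ A N : ℝ} {φ : ℝ → ℝ} {u : ℝ → ℝ → ℝ}

lemma L2norm_sub_le_mul (h : IsKdVFlow L T K φ u) {s t R : ℝ} (hs : 0 ≤ s) (hst : s ≤ t)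
    (ht : t ≤ T) (hR : ∀ τ ∈ Icc 0 T, kdvSpeed L φ u τ ≤ R) :
    L2norm L (u t - u s) ≤ R * (t - s) := by
  have hmem : ∀ τ ∈ Ioo s t, τ ∈ Icc 0 T := fun τ hτ => ⟨by linarith [hτ.1], by linarith [hτ.2]⟩
  have hR₀ : 0 ≤ R := (L2norm_nonneg L _).trans (hR s ⟨hs, hst.trans ht⟩)
  have hsq := h.L2norm_sub_sq_le hs hst ht (fun τ hτ => hR τ (hmem τ hτ))
    (B := L2norm L (u t - u s) * R) fun τ hτ => ?_
  · rcases (L2norm_nonneg L (u t - u s)).eq_or_lt with hzero | hpos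
    · rw [← hzero]
      exact mul_nonneg hR₀ (sub_nonneg.2 hst)
    · exact le_of_mul_le_mul_left (by linarith) hpos
  · refine (le_abs_self _).trans ((abs_integral_mul_le_L2norm h.length_pos.le
      (h.continuousOn_sub s t) (h.continuousOn_kdvOp (hmem τ hτ)).fun_neg).trans ?_)
    rw [L2norm_neg_kdvOp]
    exact mul_le_mul_of_nonneg_left (hR τ (hmem τ hτ)) (L2norm_nonneg L _)

lemma exists_hasLipschitzRate (h : IsKdVFlow L T K φ u) : ∃ A, HasLipschitzRate L T u A := by
  obtain ⟨R, hR⟩ := h.exists_kdvSpeed_le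
  have hR₀ : 0 ≤ R := (L2norm_nonneg L _).trans (hR 0 ⟨le_rfl, h.time_pos.le⟩)
  refine ⟨R * (T * √T), fun t ht r hr htr => ?_⟩
  have ht₀ := ht.1
  have hlip := h.L2norm_sub_le_mul ht.1.le (le_add_of_nonneg_right hr) htr hR
  rw [add_sub_cancel_left] at hlip
  refine hlip.trans (mul_le_mul_of_nonneg_right ?_ hr)
  rw [le_div_iff₀ (by positivity)]
  have htT := ht.2.le
  have hT := h.time_pos.le
  gcongr

lemma L2norm_sub_sq_le_deriv_one (h : IsKdVFlow L T K φ u) {s t k : ℝ} (hs : 0 ≤ s)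
    (hst : s ≤ t) (ht : t ≤ T) (hk : ∀ τ ∈ Ioo s t, L2norm L (kdvFlux L (φ τ) (u τ)) ≤ k) :
    L2norm L (u t - u s) ^ 2 ≤ (t - s) * (L2norm L (∂[L,1] (u t - u s)) * k) := by
  obtain ⟨R, hR⟩ := h.exists_kdvSpeed_le
  have hmem : ∀ τ ∈ Ioo s t, τ ∈ Icc 0 T := fun τ hτ => ⟨by linarith [hτ.1], by linarith [hτ.2]⟩
  have hz : IsKdVProfile L (u t - u s) :=
    (h.isKdVProfile t ⟨hs.trans hst, ht⟩).sub (h.isKdVProfile s ⟨hs, hst.trans ht⟩)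
  exact h.L2norm_sub_sq_le hs hst ht (fun τ hτ => hR τ (hmem τ hτ)) fun τ hτ =>
    (IsKdVProfile.integral_mul_neg_kdvOp_le hz (h.isKdVProfile τ (hmem τ hτ)) (φ τ)).trans
      (mul_le_mul_of_nonneg_left (hk τ hτ) (L2norm_nonneg L _))

lemma kdvSpeed_le_of_hasLipschitzRate (h : IsKdVFlow L T K φ u) (hA : 0 ≤ A)
    (hu : HasLipschitzRate L T u A) {s t : ℝ} (hs : 0 < s) (hst : s ≤ t) (ht : t < T) :
    kdvSpeed L φ u t ≤ A / (s * √s) := by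
  have ht' : t ∈ Ioo 0 T := ⟨hs.trans_le hst, ht⟩
  refine h.kdvSpeed_le_of_eventually_le ht' ?_
  filter_upwards [Ioo_mem_nhdsGT (sub_pos.2 ht)] with r hr
  refine (hu t ht' r hr.1.le (by linarith [hr.2])).trans ?_
  have hr₀ := hr.1
  have ht₀ := ht'.1.le
  gcongr

lemma le_div_mul_sqrt_of_mul_le {s T : ℝ} (hN : 0 ≤ N) (hs : 0 < s) (hsT : s ≤ T)
    (hA : T * √T * N ≤ A) : N ≤ A / (s * √s) := by
  have hT := hs.le.trans hsT
  rw [le_div_iff₀ (by positivity), mul_comm]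
  exact le_trans (by gcongr) hA

lemma L2norm_deriv_three_le_of_hasLipschitzRate (h : IsKdVFlow L T K φ u)
    (hN : L2norm L (u 0) ≤ N) (hN₁ : N ≤ 1) (hA : T * √T * N ≤ A)
    (hu : HasLipschitzRate L T u A) {s t : ℝ} (hs : 0 < s) (hst : s ≤ t) (ht : t < T) :
    L2norm L (∂[L,3] (u t)) ≤ 60 * (A / (s * √s)) := by
  have hN₀ : 0 ≤ N := (L2norm_nonneg L _).trans hN
  have hT := h.time_pos
  have hspeed := h.kdvSpeed_le_of_hasLipschitzRate (le_trans (by positivity) hA) hu hs hst ht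
  have hthree := h.L2norm_deriv_three_le ⟨(hs.trans_le hst).le, ht.le⟩ hN hspeed
  have hcube : N ^ 3 ≤ N := pow_le_of_le_one hN₀ hN₁ three_ne_zero
  linarith [le_div_mul_sqrt_of_mul_le hN₀ hs (hst.trans ht.le) hA]

lemma L2norm_kdvFlux_pow_three_le_of_hasLipschitzRate (h : IsKdVFlow L T K φ u)
    (hN : L2norm L (u 0) ≤ N) (hN₁ : N ≤ 1) (hA : T * √T * N ≤ A)
    (hu : HasLipschitzRate L T u A) {s t : ℝ} (hs : 0 < s) (hst : s ≤ t) (ht : t < T) :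
    L2norm L (kdvFlux L (φ t) (u t)) ^ 3 ≤ 1440400 * (A / (s * √s)) ^ 2 * N := by
  have ht' : t ∈ Icc 0 T := ⟨(hs.trans_le hst).le, ht.le⟩
  have hN₀ : 0 ≤ N := (L2norm_nonneg L _).trans hN
  have hle := (h.L2norm_le_initial ht').trans hN
  have hthree := h.L2norm_deriv_three_le_of_hasLipschitzRate hN hN₁ hA hu hs hst ht
  have hnorm := hle.trans (le_div_mul_sqrt_of_mul_le hN₀ hs (hst.trans ht.le) hA)
  calc L2norm L (kdvFlux L (φ t) (u t)) ^ 3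
      ≤ 400 * (L2norm L (∂[L,3] (u t)) ^ 2 + L2norm L (u t) ^ 2) * L2norm L (u t) :=
        (h.isKdVProfile t ht').L2norm_kdvFlux_pow_three_le (h.coeff_mem t ht') (hle.trans hN₁)
    _ ≤ 400 * ((60 * (A / (s * √s))) ^ 2 + (A / (s * √s)) ^ 2) * N := by
        gcongr
        all_goals exact L2norm_nonneg L _
    _ = 1440400 * (A / (s * √s)) ^ 2 * N := by ring

lemma mul_pow_four_le_of_hasShiftDoubling (h : IsKdVFlow L T K φ u)
    (hu : HasShiftDoubling L T κ u) (hκ : 0 < κ) {s t r k : ℝ} (hs : 0 ≤ s) (hst : s < t)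
    (hr : 0 ≤ r) (ht : t + r ≤ T)
    (hk : ∀ τ ∈ Ioo s (t + r), L2norm L (kdvFlux L (φ τ) (u τ)) ≤ k) :
    κ * (t - s) * L2norm L (u (t + r) - u t) ^ 4 ≤
      64 * r ^ 2 * k ^ 2 * L2norm L (u (s + r) - u s) ^ 2 := by
  obtain hzero | ⟨σ, hσ, hσ_le⟩ := hu.eq_zero_or_exists_mem_Ioo hκ hs hst hr ht
  · rw [hzero, zero_pow four_ne_zero, mul_zero]
    positivity
  have hnash := h.L2norm_sub_sq_le_deriv_one (hs.trans hσ.1.le) (le_add_of_nonneg_right hr)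
    (by linarith [hσ.2]) fun τ hτ => hk τ ⟨by linarith [hτ.1, hσ.1], by linarith [hτ.2, hσ.2]⟩
  have hdouble := hu σ t r 0 (hs.trans hσ.1.le) hσ.2.le hr ht le_rfl fun _ _ => sq_nonneg _
  rw [add_sub_cancel_left] at hnash
  set b := L2norm L (∂[L,1] (u (σ + r) - u σ))
  set q := L2norm L (u (t + r) - u t)
  set q₀ := L2norm L (u (s + r) - u s)
  have hq : q ^ 2 ≤ 4 * (r * (b * k)) := by linarith
  calc κ * (t - s) * q ^ 4 = κ * (t - s) * (q ^ 2) ^ 2 := by ring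
    _ ≤ κ * (t - s) * (4 * (r * (b * k))) ^ 2 := by gcongr
    _ = 16 * r ^ 2 * k ^ 2 * (κ * (t - s) * b ^ 2) := by ring
    _ ≤ 16 * r ^ 2 * k ^ 2 * (4 * q₀ ^ 2) := by gcongr
    _ = 64 * r ^ 2 * k ^ 2 * q₀ ^ 2 := by ring

lemma mul_pow_twelve_le_of_hasShiftDoubling (h : IsKdVFlow L T K φ u)
    (hu : HasShiftDoubling L T κ u) (hκ : 0 < κ) {s t r X : ℝ} (hs : 0 ≤ s) (hst : s < t)
    (hr : 0 ≤ r) (ht : t + r ≤ T) (hX₀ : 0 ≤ X)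
    (hX : ∀ τ ∈ Ioo s (t + r), L2norm L (kdvFlux L (φ τ) (u τ)) ^ 3 ≤ X) :
    (κ * (t - s)) ^ 3 * L2norm L (u (t + r) - u t) ^ 12 ≤
      64 ^ 3 * r ^ 6 * X ^ 2 * L2norm L (u (s + r) - u s) ^ 6 := by
  obtain ⟨k, hk₀, hk⟩ : ∃ k, 0 ≤ k ∧ k ^ 3 = X :=
    ⟨X ^ (((3 : ℕ) : ℝ)⁻¹), Real.rpow_nonneg hX₀ _, Real.rpow_inv_natCast_pow hX₀ three_ne_zero⟩
  have hfour := h.mul_pow_four_le_of_hasShiftDoubling hu hκ hs hst hr ht fun τ hτ =>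
    le_of_pow_le_pow_left₀ three_ne_zero hk₀ ((hX τ hτ).trans_eq hk.symm)
  set q := L2norm L (u (t + r) - u t)
  set q₀ := L2norm L (u (s + r) - u s)
  calc (κ * (t - s)) ^ 3 * q ^ 12 = (κ * (t - s) * q ^ 4) ^ 3 := by ring
    _ ≤ (64 * r ^ 2 * k ^ 2 * q₀ ^ 2) ^ 3 := by gcongr
    _ = 64 ^ 3 * r ^ 6 * (k ^ 3) ^ 2 * q₀ ^ 6 := by ring
    _ = 64 ^ 3 * r ^ 6 * X ^ 2 * q₀ ^ 6 := by rw [hk]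

/-- The time scales cancel: both sides of the bootstrap inequality have the same homogeneity in `t`
and `r`, and the gain is a power of `N` that `C ^ 2` turns into a factor `1 / 2`. -/
lemma le_half_div_mul_of_mul_pow_twelve_le {C t r q Λ : ℝ} (hκ : 0 < κ) (hN : 0 ≤ N) (hC : 0 ≤ C)
    (hκC : 128 ^ 3 * 1440400 ^ 2 * 8 ^ 5 * 2 ^ 12 ≤ κ ^ 3 * C ^ 2) (hA : C * N ≤ A) (ht : 0 < t)
    (hr : 0 ≤ r) (hΛ : t ^ 3 * Λ ^ 2 = 8 * A ^ 2)
    (hq : (κ * (t - t / 2)) ^ 3 * q ^ 12 ≤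
      64 ^ 3 * r ^ 6 * (1440400 * Λ ^ 2 * N) ^ 2 * (Λ * r) ^ 6) :
    q ≤ A / 2 / (t * √t) * r := by
  have hA₀ : 0 ≤ A := (mul_nonneg hC hN).trans hA
  have hsqrt : √t ^ 12 = t ^ 6 := by
    rw [show √t ^ 12 = (√t ^ 2) ^ 6 by ring, Real.sq_sqrt ht.le]
  have hpow : κ ^ 3 * (t * √t * q * 2) ^ 12 ≤ κ ^ 3 * (A * r) ^ 12 :=
    calc κ ^ 3 * (t * √t * q * 2) ^ 12
        = 2 ^ 12 * 8 * t ^ 15 * ((κ * (t - t / 2)) ^ 3 * q ^ 12) := by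
          rw [mul_pow, mul_pow, mul_pow, hsqrt]
          ring
      _ ≤ 2 ^ 12 * 8 * t ^ 15 * (64 ^ 3 * r ^ 6 * (1440400 * Λ ^ 2 * N) ^ 2 * (Λ * r) ^ 6) :=
          mul_le_mul_of_nonneg_left hq (by positivity)
      _ = 128 ^ 3 * 1440400 ^ 2 * 2 ^ 12 * (t ^ 3 * Λ ^ 2) ^ 5 * N ^ 2 * r ^ 12 := by ring
      _ = 128 ^ 3 * 1440400 ^ 2 * 8 ^ 5 * 2 ^ 12 * (A ^ 10 * N ^ 2 * r ^ 12) := by rw [hΛ]; ring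
      _ ≤ κ ^ 3 * C ^ 2 * (A ^ 10 * N ^ 2 * r ^ 12) := by gcongr
      _ = κ ^ 3 * (A ^ 10 * (C * N) ^ 2 * r ^ 12) := by ring
      _ ≤ κ ^ 3 * (A ^ 10 * A ^ 2 * r ^ 12) := by gcongr
      _ = κ ^ 3 * (A * r) ^ 12 := by ring
  have hle : t * √t * q * 2 ≤ A * r := le_of_pow_le_pow_left₀ (by norm_num) (by positivity)
    (le_of_mul_le_mul_left hpow (by positivity))
  rw [div_mul_eq_mul_div, le_div_iff₀ (by positivity)]
  linarith

lemma hasLipschitzRate_half (h : IsKdVFlow L T K φ u) (hu : HasShiftDoubling L T κ u)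
    (hκ : 0 < κ) {C : ℝ} (hN : L2norm L (u 0) ≤ N) (hN₁ : N ≤ 1) (hC : T * √T ≤ C)
    (hκC : 128 ^ 3 * 1440400 ^ 2 * 8 ^ 5 * 2 ^ 12 ≤ κ ^ 3 * C ^ 2) (hA : C * N ≤ A)
    (hrate : HasLipschitzRate L T u A) : HasLipschitzRate L T u (A / 2) := by
  intro t ht r hr htr
  have ht₀ := ht.1
  have hT := h.time_pos
  have hN₀ : 0 ≤ N := (L2norm_nonneg L _).trans hN
  have hTA : T * √T * N ≤ A := (mul_le_mul_of_nonneg_right hC hN₀).trans hA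
  set Λ := A / (t / 2 * √(t / 2)) with hΛ_def
  have hΛ : t ^ 3 * Λ ^ 2 = 8 * A ^ 2 := by
    rw [hΛ_def, div_pow, mul_pow, Real.sq_sqrt (by positivity)]
    field_simp
    ring
  have hinitial : L2norm L (u (t / 2 + r) - u (t / 2)) ≤ Λ * r :=
    hrate (t / 2) ⟨by linarith, by linarith [ht.2]⟩ r hr (by linarith)
  have htwelve := h.mul_pow_twelve_le_of_hasShiftDoubling hu hκ (s := t / 2)
    (X := 1440400 * Λ ^ 2 * N) (by linarith) (by linarith) hr htr (by positivity) fun τ hτ =>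
      h.L2norm_kdvFlux_pow_three_le_of_hasLipschitzRate hN hN₁ hTA hrate (by linarith) hτ.1.le
        (hτ.2.trans_le htr)
  refine le_half_div_mul_of_mul_pow_twelve_le hκ hN₀ (le_trans (by positivity) hC) hκC hA ht₀ hr hΛ
    (htwelve.trans (mul_le_mul_of_nonneg_left ?_ (by positivity)))
  exact pow_le_pow_left₀ (L2norm_nonneg L _) hinitial 6

lemma hasLipschitzRate_mul (h : IsKdVFlow L T K φ u) (hu : HasShiftDoubling L T κ u)
    (hκ : 0 < κ) {C : ℝ} (hN : L2norm L (u 0) ≤ N) (hN₁ : N ≤ 1) (hC : T * √T ≤ C)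
    (hκC : 128 ^ 3 * 1440400 ^ 2 * 8 ^ 5 * 2 ^ 12 ≤ κ ^ 3 * C ^ 2) :
    HasLipschitzRate L T u (C * N) := by
  obtain ⟨A, hA⟩ := h.exists_hasLipschitzRate
  have hT := h.time_pos
  have hCN : 0 ≤ C * N :=
    mul_nonneg (le_trans (by positivity) hC) ((L2norm_nonneg L _).trans hN)
  have hiterate : ∀ n : ℕ, HasLipschitzRate L T u (max (A * (1 / 2) ^ n) (C * N)) := by
    intro n
    induction n with
    | zero => exact hA.mono (by simp)
    | succ n ih =>
      rcases le_total (A * (1 / 2) ^ n) (C * N) with hle | hle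
      · rw [max_eq_right hle] at ih
        exact ih.mono (le_max_right _ _)
      · rw [max_eq_left hle] at ih
        refine (h.hasLipschitzRate_half hu hκ hN hN₁ hC hκC hle ih).mono ?_
        exact (le_of_eq (by ring)).trans (le_max_left _ _)
  intro t ht r hr htr
  have hlim : Tendsto (fun n : ℕ => max (A * (1 / 2) ^ n) (C * N)) atTop (𝓝 (C * N)) := by
    have hpow := (tendsto_pow_atTop_nhds_zero_of_lt_one (r := (1 / 2 : ℝ)) (by norm_num)
      (by norm_num)).const_mul A
    simpa [hCN] using hpow.max (tendsto_const_nhds (x := C * N))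
  exact ge_of_tendsto' ((hlim.div_const _).mul_const r) fun n => hiterate n t ht r hr htr

end IsKdVFlow

/-! ### The smoothing estimate for flows -/

section H1norm

variable {L : ℝ} {f g : ℝ → ℝ}

lemma H1norm_congr (hL : 0 ≤ L) (h : EqOn f g (Icc 0 L)) : H1norm L f = H1norm L g := by
  rw [H1norm, H1norm]
  congr 1
  refine integral_congr_Ioo hL fun x hx => ?_
  have hx' := Ioo_subset_Icc_self hx
  simp only [h hx', derivWithin_congr h (h hx')]

lemma IsKdVProfile.H1norm_le_add (h : IsKdVProfile L f) :
    H1norm L f ≤ L2norm L f + L2norm L (∂[L,1] f) := by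
  have hL := h.length_pos.le
  have hf := L2norm_nonneg L f
  have hf' := L2norm_nonneg L (∂[L,1] f)
  have hsum : ∫ x in (0 : ℝ)..L, (f x ^ 2 + derivWithin f (Icc 0 L) x ^ 2) =
      L2norm L f ^ 2 + L2norm L (∂[L,1] f) ^ 2 := by
    rw [sq_L2norm hL, sq_L2norm hL, spaceDeriv, iteratedDerivWithin_one]
    refine intervalIntegral.integral_add
      ((h.continuousOn.fun_pow 2).intervalIntegrable_of_Icc hL) ?_
    rw [← iteratedDerivWithin_one]
    exact ((h.continuousOn_deriv 1).fun_pow 2).intervalIntegrable_of_Icc hL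
  rw [H1norm, hsum, Real.sqrt_le_iff]
  refine ⟨by positivity, ?_⟩
  linarith [mul_nonneg hf hf', add_sq (L2norm L f) (L2norm L (∂[L,1] f))]

end H1norm

namespace IsKdVFlow

variable {L T K κ C N : ℝ} {φ : ℝ → ℝ} {u : ℝ → ℝ → ℝ}

lemma L2norm_deriv_one_le_of_hasLipschitzRate (h : IsKdVFlow L T K φ u)
    (hN : L2norm L (u 0) ≤ N) (hN₁ : N ≤ 1) (hC : T * √T ≤ C)
    (hu : HasLipschitzRate L T u (C * N)) {t : ℝ} (ht : t ∈ Ioo 0 T) :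
    L2norm L (∂[L,1] (u t)) ≤ (360 * C + 1) * N / √t := by
  have hT := h.time_pos
  have ht₀ := ht.1
  have hN₀ : 0 ≤ N := (L2norm_nonneg L _).trans hN
  have hC₀ : 0 ≤ C := le_trans (by positivity) hC
  have ht' := Ioo_subset_Icc_self ht
  have hthree := h.L2norm_deriv_three_le_of_hasLipschitzRate hN hN₁ (by gcongr) hu ht₀ le_rfl ht.2
  have hle := (h.L2norm_le_initial ht').trans hN
  have hnonneg := L2norm_nonneg L (u t)
  have hone : 360 * C + 1 ≤ (360 * C + 1) ^ 3 := le_self_pow₀ (by linarith) (by norm_num)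
  have hsqrt : √t ^ 3 = t * √t := by rw [pow_succ, Real.sq_sqrt ht₀.le]
  refine le_of_pow_le_pow_left₀ three_ne_zero (by positivity) ?_
  calc L2norm L (∂[L,1] (u t)) ^ 3
      ≤ 6 * L2norm L (∂[L,3] (u t)) * L2norm L (u t) ^ 2 :=
        (h.isKdVProfile t ht').L2norm_deriv_one_pow_three_le
    _ ≤ 6 * (60 * (C * N / (t * √t))) * N ^ 2 := by gcongr
    _ = 360 * C * (N ^ 3 / (t * √t)) := by ring
    _ ≤ (360 * C + 1) ^ 3 * (N ^ 3 / (t * √t)) := by gcongr; linarith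
    _ = ((360 * C + 1) * N / √t) ^ 3 := by rw [div_pow, hsqrt]; ring

lemma L2norm_deriv_one_le_at_final (h : IsKdVFlow L T K φ u) {b : ℝ → ℝ} (hbT : ContinuousAt b T)
    (hb : ∀ t ∈ Ioo 0 T, L2norm L (∂[L,1] (u t)) ≤ b t) : L2norm L (∂[L,1] (u T)) ≤ b T := by
  obtain ⟨R, hR⟩ := h.exists_kdvSpeed_le
  have hf := h.isKdVProfile T ⟨h.time_pos.le, le_rfl⟩
  have hnear : ∀ᶠ τ in 𝓝[<] T, τ ∈ Ioo 0 T := Ioo_mem_nhdsLT h.time_pos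
  have hb_tendsto : Tendsto b (𝓝[<] T) (𝓝 (b T)) := hbT.tendsto.mono_left nhdsWithin_le_nhds
  set a := L2norm L (∂[L,1] (u T))
  set d := L2norm L (∂[L,2] (u T))
  have hle : ∀ᶠ τ in 𝓝[<] T, a ^ 2 ≤ b τ * a + R * (T - τ) * d := by
    filter_upwards [hnear] with τ hτ
    refine (hf.L2norm_deriv_one_sq_le_add_sub
      (h.isKdVProfile τ (Ioo_subset_Icc_self hτ))).trans (add_le_add ?_ ?_)
    · exact mul_le_mul_of_nonneg_right (hb τ hτ) (L2norm_nonneg L _)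
    · exact mul_le_mul_of_nonneg_right (h.L2norm_sub_le_mul hτ.1.le hτ.2.le le_rfl hR)
        (L2norm_nonneg L _)
  have hlim : Tendsto (fun τ => b τ * a + R * (T - τ) * d) (𝓝[<] T) (𝓝 (b T * a)) := by
    have hrem : Tendsto (fun τ => R * (T - τ) * d) (𝓝[<] T) (𝓝 (R * (T - T) * d)) :=
      Continuous.tendsto (f := fun τ => R * (T - τ) * d) (by fun_prop) T |>.mono_left
        nhdsWithin_le_nhds
    simpa using (hb_tendsto.mul_const a).add hrem
  have hsq : a * a ≤ b T * a := (sq a).symm.trans_le (ge_of_tendsto hlim hle)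
  rcases (L2norm_nonneg L (∂[L,1] (u T))).eq_or_lt with hzero | hpos
  · refine hzero.symm.trans_le (ge_of_tendsto hb_tendsto ?_)
    filter_upwards [hnear] with τ hτ
    exact (L2norm_nonneg L _).trans (hb τ hτ)
  · exact le_of_mul_le_mul_right hsq hpos

lemma exists_hasShiftDoubling_of_L2norm_le (hL : 0 ≤ L) (hT : 0 ≤ T) (hκ : 0 < κ)
    (hκL : κ * L ≤ 1) (hκT : κ * T ≤ 1 / 8) (K : ℝ) :
    ∃ η > 0, η ≤ 1 ∧ ∀ φ u, IsKdVFlow L T K φ u → L2norm L (u 0) ≤ η →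
      HasShiftDoubling L T κ u := by
  have hconst := interactionConst_nonneg hκ.le K
  set D := 2 + (2 * κ + 2 * interactionConst κ K ^ 2 / κ) * T
  set M := 16 * L * interactionConst κ K * (2 / κ * D)
  have hM : 0 ≤ M := by positivity
  have hη₁ : 1 / (4 * M + 1) ≤ 1 := div_le_one_of_le₀ (by linarith) (by positivity)
  refine ⟨1 / (4 * M + 1), by positivity, hη₁, fun φ u h hu₀ => ?_⟩
  refine h.hasShiftDoubling hκ hκL hκT ?_
  have hu₁ := hu₀.trans hη₁
  have hkato : ∫ τ in (0 : ℝ)..T, L2norm L (∂[L,1] (u τ)) ^ 2 ≤ 2 / κ * D * L2norm L (u 0) ^ 2 := by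
    rw [mul_assoc, div_mul_eq_mul_div, le_div_iff₀ hκ]
    linarith [h.integral_sq_L2norm_deriv_one_le hκ hκL hu₁]
  calc 16 * L * interactionConst κ K * ∫ τ in (0 : ℝ)..T, L2norm L (∂[L,1] (u τ)) ^ 2
      ≤ 16 * L * interactionConst κ K * (2 / κ * D * L2norm L (u 0) ^ 2) := by gcongr
    _ = M * L2norm L (u 0) ^ 2 := by ring
    _ ≤ M * (1 / (4 * M + 1)) := by
        gcongr
        exact (pow_le_of_le_one (L2norm_nonneg L _) hu₁ two_ne_zero).trans hu₀
    _ ≤ 1 / 4 := by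
        rw [mul_one_div, div_le_iff₀ (by positivity)]
        linarith

lemma H1norm_le_of_hasLipschitzRate (h : IsKdVFlow L T K φ u) (hN : L2norm L (u 0) ≤ N)
    (hN₁ : N ≤ 1) (hC : T * √T ≤ C) (hu : HasLipschitzRate L T u (C * N)) {t : ℝ}
    (ht : t ∈ Ioc 0 T) : H1norm L (u t) ≤ (√T + (360 * C + 1)) / √t * N := by
  have ht₀ := ht.1
  have ht' := Ioc_subset_Icc_self ht
  have hgrad : L2norm L (∂[L,1] (u t)) ≤ (360 * C + 1) * N / √t := by
    rcases ht.2.eq_or_lt with rfl | htT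
    · have hsqrt : √t ≠ 0 := by positivity
      exact h.L2norm_deriv_one_le_at_final (b := fun t => (360 * C + 1) * N / √t)
        (continuousAt_const.div Real.continuous_sqrt.continuousAt hsqrt) fun τ hτ =>
          h.L2norm_deriv_one_le_of_hasLipschitzRate hN hN₁ hC hu hτ
    · exact h.L2norm_deriv_one_le_of_hasLipschitzRate hN hN₁ hC hu ⟨ht₀, htT⟩
  have hle : L2norm L (u t) ≤ √T * N / √t := by
    rw [le_div_iff₀ (by positivity), mul_comm]
    exact mul_le_mul (Real.sqrt_le_sqrt ht.2) ((h.L2norm_le_initial ht').trans hN)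
      (L2norm_nonneg L _) (Real.sqrt_nonneg T)
  calc H1norm L (u t) ≤ √T * N / √t + (360 * C + 1) * N / √t :=
        (h.isKdVProfile t ht').H1norm_le_add.trans (add_le_add hle hgrad)
    _ = (√T + (360 * C + 1)) / √t * N := by ring

theorem exists_H1norm_le (hL : 0 < L) (hT : 0 < T) (K : ℝ) :
    ∃ η > 0, ∃ C > 0, ∀ φ u, IsKdVFlow L T K φ u → L2norm L (u 0) ≤ η →
      ∀ t ∈ Ioc 0 T, H1norm L (u t) ≤ C / √t * L2norm L (u 0) := by
  obtain ⟨κ, hκ, hκL, hκT⟩ : ∃ κ : ℝ, 0 < κ ∧ κ * L ≤ 1 ∧ κ * T ≤ 1 / 8 :=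
    ⟨min (1 / L) (1 / 8 / T), by positivity, (le_div_iff₀ hL).1 (min_le_left _ _),
      (le_div_iff₀ hT).1 (min_le_right _ _)⟩
  obtain ⟨C, hC, hκC⟩ : ∃ C, T * √T ≤ C ∧
      128 ^ 3 * 1440400 ^ 2 * 8 ^ 5 * 2 ^ 12 ≤ κ ^ 3 * C ^ 2 := by
    have hlim : Tendsto (fun C : ℝ => κ ^ 3 * C ^ 2) atTop atTop :=
      (tendsto_pow_atTop two_ne_zero).const_mul_atTop (by positivity)
    exact ((eventually_ge_atTop _).and (hlim.eventually_ge_atTop _)).exists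
  obtain ⟨η, hη, hη₁, hdouble⟩ := exists_hasShiftDoubling_of_L2norm_le hL.le hT.le hκ hκL hκT K
  have hC₀ : 0 ≤ C := le_trans (by positivity) hC
  refine ⟨η, hη, √T + (360 * C + 1), by positivity, fun φ u h hu₀ t ht => ?_⟩
  have hN₁ := hu₀.trans hη₁
  exact h.H1norm_le_of_hasLipschitzRate le_rfl hN₁ hC
    (h.hasLipschitzRate_mul (hdouble φ u h hu₀) hκ le_rfl hN₁ hC hκC) ht

end IsKdVFlow

/-! ### Cutoff coefficients and classical solutions -/

/-- A coefficient with values in `[0,1]` on `[0,∞)` that is Lipschitz with constant `K` up to the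
weight `min r s`, which makes the condition invariant under the rescalings `Φ ↦ Φ(·/ε)`. Besides the
cutoffs it allows `Φ = 1`, the coefficient of the KdV equation itself. -/
structure IsScaleLipschitz (K : ℝ) (Φ : ℝ → ℝ) : Prop where
  mem_Icc : ∀ r, 0 ≤ r → Φ r ∈ Icc (0 : ℝ) 1
  abs_sub_mul_min_le : ∀ r s, 0 ≤ r → 0 ≤ s → |Φ s - Φ r| * min r s ≤ K * |s - r|

namespace IsScaleLipschitz

variable {K ε : ℝ} {Φ : ℝ → ℝ}

lemma nonneg (hΦ : IsScaleLipschitz K Φ) : 0 ≤ K := by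
  have h := hΦ.abs_sub_mul_min_le 1 2 zero_le_one zero_le_two
  norm_num at h
  exact (abs_nonneg _).trans h

lemma comp_div (hΦ : IsScaleLipschitz K Φ) (hε : 0 < ε) :
    IsScaleLipschitz K fun r => Φ (r / ε) where
  mem_Icc r hr := hΦ.mem_Icc _ (by positivity)
  abs_sub_mul_min_le r s hr hs := by
    have h := mul_le_mul_of_nonneg_right
      (hΦ.abs_sub_mul_min_le (r / ε) (s / ε) (by positivity) (by positivity)) hε.le
    rwa [mul_assoc, mul_assoc, min_div_div_right hε.le, div_mul_cancel₀ _ hε.ne', ← sub_div,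
      abs_div, abs_of_pos hε, div_mul_cancel₀ _ hε.ne'] at h

end IsScaleLipschitz

lemma IsCutoff.exists_isScaleLipschitz {Φ : ℝ → ℝ} (hΦ : IsCutoff Φ) :
    ∃ K, IsScaleLipschitz K Φ := by
  obtain ⟨hsmooth, hmem, -, hzero, -⟩ := hΦ
  have hdiff : Differentiable ℝ Φ := hsmooth.differentiable (by simp)
  have hcont : Continuous (deriv Φ) := hsmooth.continuous_deriv (by simp)
  obtain ⟨K, hK⟩ := isCompact_Icc.exists_bound_of_continuousOn (s := Icc (0 : ℝ) 1)
    hcont.continuousOn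
  have hK₀ : 0 ≤ K := (norm_nonneg _).trans (hK 0 ⟨le_rfl, zero_le_one⟩)
  have hordered : ∀ r s, 0 ≤ r → r ≤ s → |Φ s - Φ r| * r ≤ K * |s - r| := by
    intro r s hr hrs
    rcases le_total 1 r with hr₁ | hr₁
    · rw [hzero r hr₁, hzero s (hr₁.trans hrs), sub_zero, abs_zero, zero_mul]
      positivity
    have hs : Φ s = Φ (min s 1) := by
      rcases le_total s 1 with hs₁ | hs₁
      · rw [min_eq_left hs₁]
      · rw [min_eq_right hs₁, hzero s hs₁, hzero 1 self_mem_Ici]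
    have hmin : r ≤ min s 1 := le_min hrs hr₁
    calc |Φ s - Φ r| * r ≤ |Φ s - Φ r| := mul_le_of_le_one_right (abs_nonneg _) hr₁
      _ ≤ K * |min s 1 - r| := by
          rw [hs]
          exact (convex_Icc 0 1).norm_image_sub_le_of_norm_deriv_le (fun x _ => hdiff x) hK
            ⟨hr, hr₁⟩ ⟨hr.trans hmin, min_le_right s 1⟩
      _ ≤ K * |s - r| := by
          rw [abs_of_nonneg (sub_nonneg.2 hmin), abs_of_nonneg (sub_nonneg.2 hrs)]
          gcongr
          exact min_le_left s 1
  refine ⟨K, hmem, fun r s hr hs => ?_⟩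
  rcases le_total r s with hrs | hsr
  · rw [min_eq_left hrs]
    exact hordered r s hr hrs
  · rw [min_eq_right hsr, abs_sub_comm, abs_sub_comm s]
    exact hordered s r hs hsr

section Clamp

variable {L T : ℝ} (hT : 0 ≤ T) (hL : 0 ≤ L) (y : ℝ → ℝ → ℝ)

/-- The extension of a function on `[0,T] × [0,L]` to the plane that is constant along the
coordinates outside this rectangle. -/
noncomputable def clamp (t x : ℝ) : ℝ := y (projIcc 0 T hT t) (projIcc 0 L hL x)

lemma clamp_apply {t x : ℝ} (ht : t ∈ Icc 0 T) (hx : x ∈ Icc 0 L) : clamp hT hL y t x = y t x := by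
  rw [clamp, projIcc_of_mem hT ht, projIcc_of_mem hL hx]

lemma clamp_eqOn {t : ℝ} (ht : t ∈ Icc 0 T) : EqOn (clamp hT hL y t) (y t) (Icc 0 L) :=
  fun _ hx => clamp_apply hT hL y ht hx

lemma L2norm_clamp {t : ℝ} (ht : t ∈ Icc 0 T) : L2norm L (clamp hT hL y t) = L2norm L (y t) :=
  L2norm_congr hL ((clamp_eqOn hT hL y ht).mono Ioo_subset_Icc_self)

lemma continuous_clamp {y : ℝ → ℝ → ℝ}
    (hy : ContinuousOn (fun p : ℝ × ℝ => y p.1 p.2) (Icc 0 T ×ˢ Icc 0 L)) :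
    Continuous fun p : ℝ × ℝ => clamp hT hL y p.1 p.2 := by
  have hproj : Continuous fun p : ℝ × ℝ =>
      ((projIcc 0 T hT p.1 : ℝ), (projIcc 0 L hL p.2 : ℝ)) := by fun_prop
  exact hy.comp_continuous hproj fun p => ⟨(projIcc 0 T hT p.1).2, (projIcc 0 L hL p.2).2⟩

end Clamp

lemma IsModifiedKdVSol.isKdVFlow_clamp {L T K ε : ℝ} {Φ : ℝ → ℝ} {y : ℝ → ℝ → ℝ}
    (hy : IsModifiedKdVSol L T ε Φ y) (hL : 0 < L) (hT : 0 < T) (hε : 0 < ε)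
    (hΦ : IsScaleLipschitz K Φ) :
    IsKdVFlow L T K (fun t => Φ (L2norm L (clamp hT.le hL.le y t) / ε)) (clamp hT.le hL.le y) := by
  obtain ⟨hy_space, hy_time, hy_cont, hy_eq, hy_bdry⟩ := hy
  have hderiv : ∀ t ∈ Icc 0 T, ∀ k,
      EqOn (∂[L,k] (clamp hT.le hL.le y t)) (∂[L,k] (y t)) (Icc 0 L) :=
    fun t ht _ => iteratedDerivWithin_congr (clamp_eqOn hT.le hL.le y ht)
  have hΦε := hΦ.comp_div hε
  refine ⟨hT, hΦ.nonneg, continuous_clamp hT.le hL.le hy_cont, fun t ht => ?_, fun t ht x hx => ?_,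
    fun t _ => hΦε.mem_Icc _ (L2norm_nonneg L _), fun s _ t _ =>
      hΦε.abs_sub_mul_min_le _ _ (L2norm_nonneg L _) (L2norm_nonneg L _)⟩
  · have h₀ := left_mem_Icc.2 hL.le
    have h₁ := right_mem_Icc.2 hL.le
    refine ⟨hL, (hy_space t ht).congr (clamp_eqOn hT.le hL.le y ht), ?_, ?_, ?_⟩
    · rw [clamp_apply _ _ _ ht h₀, (hy_bdry t ht).1]
    · rw [clamp_apply _ _ _ ht h₁, (hy_bdry t ht).2.1]
    · rw [hderiv t ht 1 h₁, spaceDeriv, iteratedDerivWithin_one, (hy_bdry t ht).2.2]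
  · have ht' := Ioo_subset_Icc_self ht
    have hx' := Ioo_subset_Icc_self hx
    have hpde := hy_eq t ht x hx
    have htime : HasDerivAt (fun s => y s x) (derivWithin (fun s => y s x) (Icc 0 T) t) t :=
      ((hy_time x hx').differentiableOn one_ne_zero t ht').hasDerivWithinAt.hasDerivAt
        (Icc_mem_nhds ht.1 ht.2)
    have hclamp : (fun s => clamp hT.le hL.le y s x) =ᶠ[𝓝 t] fun s => y s x := by
      filter_upwards [Icc_mem_nhds ht.1 ht.2] with s hs using clamp_apply _ _ _ hs hx'
    refine (htime.congr_of_eventuallyEq hclamp).congr_deriv ?_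
    rw [kdvOp, hderiv t ht' 1 hx', hderiv t ht' 3 hx', clamp_apply _ _ _ ht' hx',
      L2norm_clamp _ _ _ ht', spaceDeriv, spaceDeriv, iteratedDerivWithin_one]
    linarith

theorem modifiedKdV_smoothing_rate_general (L T K : ℝ) (hL : 0 < L) (hT : 0 < T) :
    ∃ η > 0, ∃ C > 0, ∀ Φ, IsScaleLipschitz K Φ → ∀ ε > 0, ∀ y₀ : ℝ → ℝ, L2norm L y₀ ≤ η →
      ∀ y : ℝ → ℝ → ℝ, IsModifiedKdVSol L T ε Φ y →
      (∀ x ∈ Icc (0 : ℝ) L, y 0 x = y₀ x) →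
      ∀ t ∈ Ioc (0 : ℝ) T, H1norm L (y t) ≤ C / √t * L2norm L y₀ := by
  obtain ⟨η, hη, C, hC, hflow⟩ := IsKdVFlow.exists_H1norm_le hL hT K
  refine ⟨η, hη, C, hC, fun Φ hΦ ε hε y₀ hy₀ y hy hinit t ht => ?_⟩
  have hnorm : L2norm L (clamp hT.le hL.le y 0) = L2norm L y₀ :=
    (L2norm_clamp _ _ _ (left_mem_Icc.2 hT.le)).trans
      (L2norm_congr hL.le fun x hx => hinit x (Ioo_subset_Icc_self hx))
  have hH1 := hflow _ _ (hy.isKdVFlow_clamp hL hT hε hΦ) (hnorm.trans_le hy₀) t ht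
  rwa [hnorm, H1norm_congr hL.le (clamp_eqOn _ _ _ (Ioc_subset_Icc_self ht))] at hH1

/-- there exist `η > 0` and `C > 0` such that for every `ε ∈ (0,1]`,
every initial datum `y₀` with `‖y₀‖_{L²(0,L)} ≤ η` and every classical solution `y`
of the modified KdV system on `[0,T]` with `y(0,·) = y₀`, one has
`‖y(t,·)‖_{H₀¹(0,L)} ≤ (C/√t) ‖y₀‖_{L²(0,L)}` for all `t ∈ (0,T]`. -/
theorem modifiedKdV_smoothing_rate (L T : ℝ) (hL : 0 < L) (hT : 0 < T)
    (Φ : ℝ → ℝ) (hΦ : IsCutoff Φ) :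
    ∃ η > 0, ∃ C > 0, ∀ ε ∈ Ioc (0:ℝ) 1, ∀ y₀ : ℝ → ℝ, L2norm L y₀ ≤ η →
      ∀ y : ℝ → ℝ → ℝ, IsModifiedKdVSol L T ε Φ y →
      (∀ x ∈ Icc (0:ℝ) L, y 0 x = y₀ x) →
      ∀ t ∈ Ioc (0:ℝ) T, H1norm L (y t) ≤ C / Real.sqrt t * L2norm L y₀ := by
  obtain ⟨K, hK⟩ := hΦ.exists_isScaleLipschitz
  obtain ⟨η, hη, C, hC, hbound⟩ := modifiedKdV_smoothing_rate_general L T K hL hT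
  exact ⟨η, hη, C, hC, fun ε hε => hbound Φ hK ε hε.1⟩
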